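/- arXiv:1406.7229 — 5 statements merged into one kernel-verified Lean document; each statement's English description precedes it below -/
import Mathlib

section
/- Define Ñ_* f(x) = sup_{0 < P ≤ c_m} |(1/P) ∫_0^P (Ñ_p f)(x) dp|. There exists a constant C = C(m), independent of N, such that for every nonnegative function f : G → [0, ∞) and every x ∈ G, M_S^L f(x) ≤ C · Ñ_* f(x). -/
open Finset

noncomputable section

/-- Hamming weight on `(ℤ/(m+1)ℤ)^N`. -/
def hw {m N : ℕ} (y : Fin N → ZMod (m + 1)) : ℕ :=
  (Finset.univ.filter fun i => y i ≠ 0).card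

/-- `L¹`-normalized indicator of the sphere of radius `r` (zero if `r < 0` or `r > N`). -/
def sigmaC (m N : ℕ) (r : ℤ) : (Fin N → ZMod (m + 1)) → ℂ := fun x =>
  if (hw x : ℤ) = r then
    ((Finset.univ.filter fun y : Fin N → ZMod (m + 1) => (hw y : ℤ) = r).card : ℂ)⁻¹
  else 0

/-- Convolution on `(ℤ/(m+1)ℤ)^N`. -/
def convC {m N : ℕ} (g f : (Fin N → ZMod (m + 1)) → ℂ) : (Fin N → ZMod (m + 1)) → ℂ :=
  fun x => ∑ y, g y * f (x - y)

/-- The smooth local spherical maximal function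
`M_S^L f (x) = max_{0 ≤ L ≤ c_m N} (1/(L+1)) |Σ_{k=0}^L (σ_k * f)(x)|`.
Note that the integers `L` with `0 ≤ L ≤ c_m·N = m·N/(m+1)` are exactly those with
`L ≤ ⌊m·N/(m+1)⌋ = (m*N)/(m+1)` (natural division). -/
def smoothLocalMax (m N : ℕ) (f : (Fin N → ZMod (m + 1)) → ℂ) (x : Fin N → ZMod (m + 1)) : ℝ :=
  (Finset.range ((m * N) / (m + 1) + 1)).sup' Finset.nonempty_range_add_one fun L =>
    (1 / ((L : ℝ) + 1)) * ‖∑ k ∈ Finset.range (L + 1), convC (sigmaC m N (k : ℤ)) f x‖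


/-- The noise density `μ̃_p^N(y) = (p/m)^{|y|} (1-p)^{N-|y|}`. -/
def noiseDensity (m N : ℕ) (p : ℝ) (y : Fin N → ZMod (m + 1)) : ℝ :=
  (p / m) ^ hw y * (1 - p) ^ (N - hw y)

/-- The noise operator `Ñ_p f = f * μ̃_p^N`. -/
def noiseOp (m N : ℕ) (p : ℝ) (f : (Fin N → ZMod (m + 1)) → ℂ) :
    (Fin N → ZMod (m + 1)) → ℂ :=
  convC (fun y => (noiseDensity m N p y : ℂ)) f

/-- The reparametrized maximal function `Ñ_* f(x) = sup_{0<P≤c_m} |(1/P)∫_0^P (Ñ_p f)(x) dp|`. -/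
def reparamMax (m N : ℕ) (f : (Fin N → ZMod (m + 1)) → ℂ) (x : Fin N → ZMod (m + 1)) : ℝ :=
  ⨆ P : Set.Ioc (0 : ℝ) ((m : ℝ) / (m + 1)),
    ‖(1 / (P : ℝ)) • ∫ p in (0 : ℝ)..(P : ℝ), noiseOp m N p f x‖

/-!
Both sides are convolutions of `f ≥ 0` with nonnegative radial kernels, so it suffices to compare
the kernels pointwise. At a point of weight `k ≤ L` the comparison reads
`1 / (L + 1) ≤ 4 * N.choose k * (1 / P) * ∫₀ᴾ p ^ k * (1 - p) ^ (N - k) dp`. The integral over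
`[0, 1]` times `N.choose k` is `1 / (N + 1)`, so any `P ≤ 2 * (L + 1) / (N + 1)` works for which
`[0, P]` carries at least half of the mass of `p ^ k * (1 - p) ^ (N - k)` for every `k ≤ L`.
Take `P = 2 * (L + 1) / (N + 2)`, twice the largest mean, if this is at most `c = m / (m + 1)`: then
Markov's inequality gives half of the mass. Otherwise take `P = c ≥ 1 / 2`; since the mode `k / N`
is at most `c`, reflecting `[c, 1]` in `c` increases the integrand pointwise.
-/

section HammingSphere

variable {ι α : Type*} [Fintype ι] [DecidableEq ι] [Fintype α] [DecidableEq α] [Zero α]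

lemma filter_support_eq_piFinset (s : Finset ι) :
    ({y | ({i | y i ≠ 0} : Finset ι) = s} : Finset (ι → α)) =
      Fintype.piFinset fun i => if i ∈ s then univ.erase 0 else {0} := by
  ext y
  simp only [Finset.ext_iff, mem_filter, mem_univ, true_and, Fintype.mem_piFinset]
  refine forall_congr' fun i => ?_
  by_cases hi : i ∈ s <;> simp [hi]

lemma card_filter_support_eq (s : Finset ι) :
    #{y : ι → α | ({i | y i ≠ 0} : Finset ι) = s} = (Fintype.card α - 1) ^ #s := by
  rw [filter_support_eq_piFinset, Fintype.card_piFinset]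
  simp only [apply_ite card, card_erase_of_mem (mem_univ _), card_univ, card_singleton]
  rw [Finset.prod_ite_mem, univ_inter, prod_const]

lemma card_filter_hammingNorm_eq (k : ℕ) :
    #{y : ι → α | hammingNorm y = k} =
      (Fintype.card ι).choose k * (Fintype.card α - 1) ^ k := by
  have support_mem : ∀ y ∈ ({y | hammingNorm y = k} : Finset (ι → α)),
      ({i | y i ≠ 0} : Finset ι) ∈ powersetCard k univ := fun y hy =>
    mem_powersetCard.2 ⟨subset_univ _, (mem_filter.1 hy).2⟩
  have card_fiber : ∀ s ∈ powersetCard k (univ : Finset ι),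
      #{y ∈ ({y | hammingNorm y = k} : Finset (ι → α)) | ({i | y i ≠ 0} : Finset ι) = s} =
        (Fintype.card α - 1) ^ k := by
    intro s hs
    obtain rfl := (mem_powersetCard.1 hs).2
    rw [← card_filter_support_eq s, filter_filter]
    congr 1
    refine filter_congr fun y _ => and_iff_right_of_imp ?_
    rintro rfl
    rfl
  rw [card_eq_sum_card_fiberwise support_mem, sum_congr rfl card_fiber, sum_const,
    card_powersetCard, card_univ, smul_eq_mul]

end HammingSphere

section Reflection

-- The power series of `log (1 + s) - log (1 - s)` is odd with nonnegative coefficients, so the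
-- comparison is termwise.
lemma mul_log_one_add_sub_log_one_sub_le {a b s u : ℝ} (hb : 0 ≤ b) (hs : 0 ≤ s) (hsu : s ≤ u)
    (hu : u < 1) (hab : a * s ≤ b * u) :
    a * (Real.log (1 + s) - Real.log (1 - s)) ≤ b * (Real.log (1 + u) - Real.log (1 - u)) := by
  have hu₀ : 0 ≤ u := hs.trans hsu
  have series_s := Real.hasSum_log_sub_log_of_abs_lt_one (abs_lt.2 ⟨by linarith, hsu.trans_lt hu⟩)
  have series_u := Real.hasSum_log_sub_log_of_abs_lt_one (abs_lt.2 ⟨by linarith, hu⟩)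
  refine hasSum_le (fun j => ?_) (series_s.mul_left a) (series_u.mul_left b)
  calc a * (2 * (1 / (2 * j + 1)) * s ^ (2 * j + 1))
      = 2 * (1 / (2 * j + 1)) * (a * s * s ^ (2 * j)) := by ring
    _ ≤ 2 * (1 / (2 * j + 1)) * (b * u * u ^ (2 * j)) := by gcongr
    _ = b * (2 * (1 / (2 * j + 1)) * u ^ (2 * j + 1)) := by ring

lemma one_add_pow_mul_one_sub_pow_le {a b : ℕ} {s u : ℝ} (hs : 0 ≤ s) (hsu : s ≤ u) (hu : u ≤ 1)
    (hab : a * s ≤ b * u) :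
    (1 + s) ^ a * (1 - u) ^ b ≤ (1 - s) ^ a * (1 + u) ^ b := by
  rcases hu.eq_or_lt with rfl | hu
  · rcases b.eq_zero_or_pos with rfl | hb
    · have : (a : ℝ) * s = 0 := le_antisymm (by simpa using hab) (by positivity)
      rcases mul_eq_zero.1 this with ha | rfl
      · simp [Nat.cast_eq_zero.1 ha]
      · simp
    · rw [sub_self, zero_pow hb.ne', mul_zero]
      have : 0 ≤ 1 - s := sub_nonneg.2 hsu
      positivity
  · have hlog := mul_log_one_add_sub_log_one_sub_le b.cast_nonneg hs hsu hu hab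
    have s_add_pos : 0 < (1 + s) ^ a := pow_pos (by linarith) a
    have s_sub_pos : 0 < (1 - s) ^ a := pow_pos (by linarith) a
    have u_add_pos : 0 < (1 + u) ^ b := pow_pos (by linarith) b
    have u_sub_pos : 0 < (1 - u) ^ b := pow_pos (by linarith) b
    rw [← Real.log_le_log_iff (mul_pos s_add_pos u_sub_pos) (mul_pos s_sub_pos u_add_pos),
      Real.log_mul s_add_pos.ne' u_sub_pos.ne', Real.log_mul s_sub_pos.ne' u_add_pos.ne']
    simp only [Real.log_pow]
    linarith

lemma add_pow_mul_sub_pow_le {a b : ℕ} {P Q t : ℝ} (hQ : 0 < Q) (hQP : Q ≤ P)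
    (hab : a * Q ≤ b * P) (ht : 0 ≤ t) (htQ : t ≤ Q) :
    (P + t) ^ a * (Q - t) ^ b ≤ (P - t) ^ a * (Q + t) ^ b := by
  have hP : 0 < P := hQ.trans_le hQP
  have hscaled : a * (t / P) ≤ b * (t / Q) := by
    rw [mul_div_assoc', mul_div_assoc', div_le_div_iff₀ hP hQ]
    nlinarith
  have hunit := one_add_pow_mul_one_sub_pow_le (by positivity : 0 ≤ t / P) (by gcongr)
    ((div_le_one hQ).2 htQ) hscaled
  have factor_add {R : ℝ} (hR : 0 < R) : R + t = R * (1 + t / R) := by field_simp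
  have factor_sub {R : ℝ} (hR : 0 < R) : R - t = R * (1 - t / R) := by field_simp
  rw [factor_add hP, factor_sub hQ, factor_sub hP, factor_add hQ]
  simp only [mul_pow]
  calc P ^ a * (1 + t / P) ^ a * (Q ^ b * (1 - t / Q) ^ b)
      = P ^ a * Q ^ b * ((1 + t / P) ^ a * (1 - t / Q) ^ b) := by ring
    _ ≤ P ^ a * Q ^ b * ((1 - t / P) ^ a * (1 + t / Q) ^ b) := by gcongr
    _ = P ^ a * (1 - t / P) ^ a * (Q ^ b * (1 + t / Q) ^ b) := by ring

end Reflection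

section IncompleteBeta

/-- The incomplete beta function `B(P; a + 1, b + 1)`, with exponents rather than the classical
shape parameters as arguments. -/
def incompleteBeta (a b : ℕ) (P : ℝ) : ℝ :=
  ∫ x in (0 : ℝ)..P, x ^ a * (1 - x) ^ b

variable (a b : ℕ)

lemma intervalIntegrable_pow_mul_one_sub_pow (u v : ℝ) :
    IntervalIntegrable (fun x : ℝ => x ^ a * (1 - x) ^ b) MeasureTheory.volume u v :=
  Continuous.intervalIntegrable (by fun_prop) u v

lemma pow_mul_one_sub_pow_nonneg {x : ℝ} (hx : x ∈ Set.Icc 0 1) : 0 ≤ x ^ a * (1 - x) ^ b :=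
  mul_nonneg (pow_nonneg hx.1 a) (pow_nonneg (sub_nonneg.2 hx.2) b)

lemma integral_pow_mul_one_sub_pow_mono {u v u' v' : ℝ} (hu' : 0 ≤ u') (hu : u' ≤ u) (huv : u ≤ v)
    (hv : v ≤ v') (hv' : v' ≤ 1) :
    ∫ x in u..v, x ^ a * (1 - x) ^ b ≤ ∫ x in u'..v', x ^ a * (1 - x) ^ b := by
  refine intervalIntegral.integral_mono_interval hu huv hv ?_
    (intervalIntegrable_pow_mul_one_sub_pow a b _ _)
  filter_upwards [MeasureTheory.ae_restrict_mem measurableSet_Ioc] with x hx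
  exact pow_mul_one_sub_pow_nonneg a b ⟨hu'.trans hx.1.le, hx.2.trans hv'⟩

lemma incompleteBeta_nonneg {P : ℝ} (hP : P ∈ Set.Icc 0 1) : 0 ≤ incompleteBeta a b P :=
  intervalIntegral.integral_nonneg hP.1 fun _ hx =>
    pow_mul_one_sub_pow_nonneg a b ⟨hx.1, hx.2.trans hP.2⟩

lemma incompleteBeta_le_self {P : ℝ} (hP : P ∈ Set.Icc 0 1) : incompleteBeta a b P ≤ P := by
  have integrand_le_one : ∀ x ∈ Set.Icc 0 P, x ^ a * (1 - x) ^ b ≤ 1 := fun x hx =>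
    mul_le_one₀ (pow_le_one₀ hx.1 (hx.2.trans hP.2))
      (pow_nonneg (by linarith [hx.2, hP.2]) b)
      (pow_le_one₀ (by linarith [hx.2, hP.2]) (by linarith [hx.1]))
  simpa [incompleteBeta] using intervalIntegral.integral_mono_on hP.1
    (intervalIntegrable_pow_mul_one_sub_pow a b 0 P) intervalIntegrable_const integrand_le_one

lemma incompleteBeta_one_eq_add (P : ℝ) :
    incompleteBeta a b 1 = incompleteBeta a b P + ∫ x in P..1, x ^ a * (1 - x) ^ b :=
  (intervalIntegral.integral_add_adjacent_intervals
    (intervalIntegrable_pow_mul_one_sub_pow a b 0 P)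
    (intervalIntegrable_pow_mul_one_sub_pow a b P 1)).symm

open scoped Nat in
lemma incompleteBeta_one_eq_factorial :
    incompleteBeta a b 1 = (a ! * b ! : ℝ) / (a + b + 1)! := by
  have beta_eq_ofReal : Complex.betaIntegral (a + 1) (b + 1) = (incompleteBeta a b 1 : ℂ) := by
    simp only [Complex.betaIntegral, incompleteBeta, add_sub_cancel_right, Complex.cpow_natCast,
      ← intervalIntegral.integral_ofReal]
    push_cast
    rfl
  have beta_eq_gamma := Complex.betaIntegral_eq_Gamma_mul_div (a + 1) (b + 1)
    (by simpa using Nat.cast_add_one_pos (α := ℝ) a)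
    (by simpa using Nat.cast_add_one_pos (α := ℝ) b)
  have gamma_add : Complex.Gamma (a + 1 + (b + 1)) = (a + b + 1)! := by
    rw [← Complex.Gamma_nat_eq_factorial]
    push_cast
    ring_nf
  rw [beta_eq_ofReal, gamma_add, Complex.Gamma_nat_eq_factorial,
    Complex.Gamma_nat_eq_factorial] at beta_eq_gamma
  apply Complex.ofReal_injective
  simpa using beta_eq_gamma

lemma incompleteBeta_succ_one :
    (a + b + 2 : ℝ) * incompleteBeta (a + 1) b 1 = (a + 1) * incompleteBeta a b 1 := by
  simp only [incompleteBeta_one_eq_factorial, show a + 1 + b + 1 = a + b + 1 + 1 by ring,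
    Nat.factorial_succ]
  push_cast
  field_simp
  ring

lemma choose_mul_incompleteBeta_one {N k : ℕ} (hk : k ≤ N) :
    N.choose k * incompleteBeta k (N - k) 1 = ((N : ℝ) + 1)⁻¹ := by
  rw [incompleteBeta_one_eq_factorial, Nat.add_sub_cancel' hk, Nat.factorial_succ,
    ← Nat.choose_mul_factorial_mul_factorial hk]
  have := Nat.choose_pos hk
  push_cast
  field_simp

-- Markov's inequality: `(a + 1) / (a + b + 2)` is the mean of the law with density proportional to
-- `x ^ a * (1 - x) ^ b`.
lemma incompleteBeta_one_le_two_mul_of_two_mul_mean_le {P : ℝ} (hP₀ : 0 < P) (hP₁ : P ≤ 1)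
    (hmean : 2 * (a + 1) ≤ P * (a + b + 2)) :
    incompleteBeta a b 1 ≤ 2 * incompleteBeta a b P := by
  have tail_le_moment :
      P * ∫ x in P..1, x ^ a * (1 - x) ^ b ≤ incompleteBeta (a + 1) b 1 := by
    refine le_trans ?_ (integral_pow_mul_one_sub_pow_mono (a + 1) b le_rfl hP₀.le hP₁ le_rfl le_rfl)
    rw [← intervalIntegral.integral_const_mul]
    refine intervalIntegral.integral_mono_on hP₁
      ((intervalIntegrable_pow_mul_one_sub_pow a b P 1).const_mul P)
      (intervalIntegrable_pow_mul_one_sub_pow (a + 1) b P 1) fun x hx => ?_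
    rw [pow_succ', mul_assoc]
    exact mul_le_mul_of_nonneg_right hx.1
      (pow_mul_one_sub_pow_nonneg a b ⟨hP₀.le.trans hx.1, hx.2⟩)
  have hB : 0 ≤ incompleteBeta a b 1 := incompleteBeta_nonneg a b ⟨zero_le_one, le_rfl⟩
  have two_mul_tail_le : 2 * (∫ x in P..1, x ^ a * (1 - x) ^ b) ≤ incompleteBeta a b 1 := by
    refine le_of_mul_le_mul_left ?_ (by positivity : 0 < P * (a + b + 2))
    calc P * (a + b + 2) * (2 * ∫ x in P..1, x ^ a * (1 - x) ^ b)
        = 2 * ((a + b + 2) * (P * ∫ x in P..1, x ^ a * (1 - x) ^ b)) := by ring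
      _ ≤ 2 * ((a + b + 2) * incompleteBeta (a + 1) b 1) := by gcongr
      _ = 2 * (a + 1) * incompleteBeta a b 1 := by rw [incompleteBeta_succ_one]; ring
      _ ≤ P * (a + b + 2) * incompleteBeta a b 1 := by gcongr
  linarith [incompleteBeta_one_eq_add a b P]

lemma integral_tail_le_incompleteBeta_of_mode_le {P : ℝ} (hP : 1 / 2 ≤ P) (hP₁ : P < 1)
    (hmode : a ≤ P * (a + b)) :
    ∫ x in P..1, x ^ a * (1 - x) ^ b ≤ incompleteBeta a b P := by
  let w : ℝ → ℝ := fun x => x ^ a * (1 - x) ^ b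
  calc ∫ x in P..1, w x
      = ∫ t in (0 : ℝ)..(1 - P), w (P + t) := by
        rw [intervalIntegral.integral_comp_add_left, add_zero, add_sub_cancel]
    _ ≤ ∫ t in (0 : ℝ)..(1 - P), w (P - t) := by
        refine intervalIntegral.integral_mono_on (by linarith)
          (Continuous.intervalIntegrable (by fun_prop) _ _)
          (Continuous.intervalIntegrable (by fun_prop) _ _) fun t ht => ?_
        have := add_pow_mul_sub_pow_le (a := a) (b := b) (by linarith : 0 < 1 - P)
          (by linarith : 1 - P ≤ P) (by linarith) ht.1 ht.2
        simpa only [w, sub_sub, sub_sub_eq_add_sub, sub_add_eq_add_sub] using this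
    _ = ∫ x in (P - (1 - P))..P, w x := by
        rw [intervalIntegral.integral_comp_sub_left, sub_zero]
    _ ≤ incompleteBeta a b P :=
        integral_pow_mul_one_sub_pow_mono a b le_rfl (by linarith) (by linarith) le_rfl hP₁.le

lemma incompleteBeta_one_le_two_mul_of_mode_le {P : ℝ} (hP : 1 / 2 ≤ P) (hP₁ : P < 1)
    (hmode : a ≤ P * (a + b)) :
    incompleteBeta a b 1 ≤ 2 * incompleteBeta a b P := by
  linarith [incompleteBeta_one_eq_add a b P,
    integral_tail_le_incompleteBeta_of_mode_le a b hP hP₁ hmode]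

end IncompleteBeta

section NoiseLevel

/-- The upper end `P` of the noise range whose average dominates the mean of the spheres of radius
at most `L`: twice the mean of the density proportional to `x ^ L * (1 - x) ^ (N - L)`, truncated
at `c`. -/
def noiseLevel (c : ℝ) (N L : ℕ) : ℝ :=
  min c (2 * (L + 1) / (N + 2))

variable {c : ℝ} {N L : ℕ}

lemma noiseLevel_mem_Ioc (hc : 0 < c) : noiseLevel c N L ∈ Set.Ioc 0 c :=
  ⟨lt_min hc (by positivity), min_le_left _ _⟩

lemma noiseLevel_mul_le (hc : 0 < c) : noiseLevel c N L * (N + 1) ≤ 2 * (L + 1) :=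
  calc noiseLevel c N L * (N + 1)
      ≤ noiseLevel c N L * (N + 2) := by
        gcongr
        · exact (noiseLevel_mem_Ioc hc).1.le
        · norm_num
    _ ≤ 2 * (L + 1) := (le_div_iff₀ (by positivity)).1 (min_le_right _ _)

lemma incompleteBeta_one_le_two_mul_noiseLevel {k : ℕ} (hc : 1 / 2 ≤ c) (hc₁ : c < 1)
    (hL : L ≤ c * N) (hkL : k ≤ L) :
    incompleteBeta k (N - k) 1 ≤ 2 * incompleteBeta k (N - k) (noiseLevel c N L) := by
  have hLN : L ≤ N := by
    exact_mod_cast hL.trans (mul_le_of_le_one_left N.cast_nonneg hc₁.le)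
  have hkN : (k : ℝ) + (N - k : ℕ) = N := by exact_mod_cast Nat.add_sub_cancel' (hkL.trans hLN)
  have hkL : (k : ℝ) ≤ L := by exact_mod_cast hkL
  rcases le_total c (2 * (L + 1) / (N + 2)) with hle | hle
  · rw [noiseLevel, min_eq_left hle]
    exact incompleteBeta_one_le_two_mul_of_mode_le _ _ hc hc₁ (by rw [hkN]; exact hkL.trans hL)
  · rw [noiseLevel, min_eq_right hle]
    refine incompleteBeta_one_le_two_mul_of_two_mul_mean_le _ _ (by positivity)
      (hle.trans hc₁.le) ?_
    rw [hkN, div_mul_cancel₀ _ (by positivity)]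
    linarith

lemma one_div_le_four_mul_choose_mul_incompleteBeta {k : ℕ} (hc : 1 / 2 ≤ c) (hc₁ : c < 1)
    (hL : L ≤ c * N) (hkL : k ≤ L) :
    1 / ((L : ℝ) + 1) ≤ 4 * (N.choose k *
      (1 / noiseLevel c N L * incompleteBeta k (N - k) (noiseLevel c N L))) := by
  have hLN : L ≤ N := by
    exact_mod_cast hL.trans (mul_le_of_le_one_left N.cast_nonneg hc₁.le)
  have hP := (noiseLevel_mem_Ioc (N := N) (L := L) (by linarith : 0 < c)).1
  have hPN := noiseLevel_mul_le (N := N) (L := L) (by linarith : 0 < c)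
  have hB := incompleteBeta_one_le_two_mul_noiseLevel hc hc₁ hL hkL
  set P := noiseLevel c N L
  calc 1 / ((L : ℝ) + 1)
      ≤ 2 / P * ((N : ℝ) + 1)⁻¹ := by
        rw [← div_eq_mul_inv, div_div, div_le_div_iff₀ (by positivity) (by positivity)]
        linarith
    _ = 2 / P * (N.choose k * incompleteBeta k (N - k) 1) := by
        rw [choose_mul_incompleteBeta_one (hkL.trans hLN)]
    _ ≤ 2 / P * (N.choose k * (2 * incompleteBeta k (N - k) P)) := by gcongr
    _ = 4 * (N.choose k * (1 / P * incompleteBeta k (N - k) P)) := by ring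

end NoiseLevel

section Kernels

variable {m N : ℕ}

lemma hw_le (y : Fin N → ZMod (m + 1)) : hw y ≤ N :=
  (hammingNorm_le_card_fintype (x := y)).trans_eq (Fintype.card_fin N)

lemma card_sphere (m N k : ℕ) :
    #{y : Fin N → ZMod (m + 1) | hw y = k} = N.choose k * m ^ k :=
  (card_filter_hammingNorm_eq k).trans <| by
    rw [Fintype.card_fin, ZMod.card, Nat.add_sub_cancel]

/-- The convolution kernel `(1 / (L + 1)) ∑_{k ≤ L} σ_k` of the mean over the spheres of radius at
most `L`, using `#𝕊_k = N.choose k * m ^ k`. -/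
def sphereMeanKernel (m N L : ℕ) (y : Fin N → ZMod (m + 1)) : ℝ :=
  if hw y ≤ L then 1 / ((L : ℝ) + 1) * ((N.choose (hw y) : ℝ) * m ^ hw y)⁻¹ else 0

/-- The convolution kernel `(1 / P) ∫₀ᴾ μ̃_p^N dp` of the mean of the noise operators over
`[0, P]`. -/
def noiseMeanKernel (m N : ℕ) (P : ℝ) (y : Fin N → ZMod (m + 1)) : ℝ :=
  1 / P * ∫ p in (0 : ℝ)..P, noiseDensity m N p y

lemma sphereMeanKernel_nonneg (L : ℕ) (y : Fin N → ZMod (m + 1)) :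
    0 ≤ sphereMeanKernel m N L y := by
  unfold sphereMeanKernel
  split_ifs <;> positivity

lemma noiseMeanKernel_eq (P : ℝ) (y : Fin N → ZMod (m + 1)) :
    noiseMeanKernel m N P y =
      ((m : ℝ) ^ hw y)⁻¹ * (1 / P * incompleteBeta (hw y) (N - hw y) P) := by
  have density_eq (p : ℝ) : noiseDensity m N p y =
      ((m : ℝ) ^ hw y)⁻¹ * (p ^ hw y * (1 - p) ^ (N - hw y)) := by
    rw [noiseDensity, div_pow]
    ring
  simp only [noiseMeanKernel, density_eq, intervalIntegral.integral_const_mul, incompleteBeta]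
  ring

lemma noiseMeanKernel_mem_Icc {P : ℝ} (hP : P ∈ Set.Ioc 0 1) (y : Fin N → ZMod (m + 1)) :
    noiseMeanKernel m N P y ∈ Set.Icc 0 1 := by
  have hP' : P ∈ Set.Icc 0 1 := Set.Ioc_subset_Icc_self hP
  have hP₀ : 0 ≤ 1 / P := one_div_nonneg.2 hP.1.le
  have mean_nonneg : 0 ≤ 1 / P * incompleteBeta (hw y) (N - hw y) P :=
    mul_nonneg hP₀ (incompleteBeta_nonneg _ _ hP')
  have mean_le_one : 1 / P * incompleteBeta (hw y) (N - hw y) P ≤ 1 := by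
    rw [one_div_mul_eq_div, div_le_one hP.1]
    exact incompleteBeta_le_self _ _ hP'
  have inv_le_one : ((m : ℝ) ^ hw y)⁻¹ ≤ 1 := by
    exact_mod_cast Nat.cast_inv_le_one (α := ℝ) (m ^ hw y)
  rw [noiseMeanKernel_eq]
  exact ⟨by positivity, mul_le_one₀ inv_le_one mean_nonneg mean_le_one⟩

lemma sphereMeanKernel_le_four_mul_noiseMeanKernel {c : ℝ} {L : ℕ} (hc : 1 / 2 ≤ c) (hc₁ : c < 1)
    (hL : L ≤ c * N) (y : Fin N → ZMod (m + 1)) :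
    sphereMeanKernel m N L y ≤ 4 * noiseMeanKernel m N (noiseLevel c N L) y := by
  unfold sphereMeanKernel
  split_ifs with hy
  · have hchoose : (N.choose (hw y) : ℝ) ≠ 0 := by exact_mod_cast (Nat.choose_pos (hw_le y)).ne'
    rw [noiseMeanKernel_eq]
    set B := 1 / noiseLevel c N L * incompleteBeta (hw y) (N - hw y) (noiseLevel c N L)
    calc 1 / ((L : ℝ) + 1) * ((N.choose (hw y) : ℝ) * m ^ hw y)⁻¹
        ≤ 4 * (N.choose (hw y) * B) * ((N.choose (hw y) : ℝ) * m ^ hw y)⁻¹ := by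
          gcongr
          exact one_div_le_four_mul_choose_mul_incompleteBeta hc hc₁ hL hy
      _ = 4 * (((m : ℝ) ^ hw y)⁻¹ * B) := by
          rw [mul_inv]
          field_simp
  · obtain ⟨hP₀, hPc⟩ := noiseLevel_mem_Ioc (N := N) (L := L) (by linarith : 0 < c)
    have := (noiseMeanKernel_mem_Icc ⟨hP₀, hPc.trans hc₁.le⟩ y).1
    positivity

end Kernels

section Convolution

variable {m N : ℕ}

lemma norm_convC_le_sum_norm {g : (Fin N → ZMod (m + 1)) → ℂ} (hg : ∀ y, ‖g y‖ ≤ 1)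
    (f : (Fin N → ZMod (m + 1)) → ℂ) (x : Fin N → ZMod (m + 1)) :
    ‖convC g f x‖ ≤ ∑ y, ‖f (x - y)‖ :=
  norm_sum_le_of_le _ fun y _ => by
    rw [norm_mul]
    exact mul_le_of_le_one_left (norm_nonneg _) (hg y)

lemma convC_ofReal (g f : (Fin N → ZMod (m + 1)) → ℝ) (x : Fin N → ZMod (m + 1)) :
    convC (fun y => (g y : ℂ)) (fun y => (f y : ℂ)) x = ((∑ y, g y * f (x - y) : ℝ) : ℂ) := by
  simp [convC]

lemma norm_convC_le_mul_norm_convC {g h f : (Fin N → ZMod (m + 1)) → ℝ} {C : ℝ} (hC : 0 ≤ C)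
    (hg : ∀ y, 0 ≤ g y) (hgh : ∀ y, g y ≤ C * h y) (hf : ∀ y, 0 ≤ f y)
    (x : Fin N → ZMod (m + 1)) :
    ‖convC (fun y => (g y : ℂ)) (fun y => (f y : ℂ)) x‖ ≤
      C * ‖convC (fun y => (h y : ℂ)) (fun y => (f y : ℂ)) x‖ := by
  rw [convC_ofReal, convC_ofReal, Complex.norm_real, Complex.norm_real,
    Real.norm_of_nonneg (sum_nonneg fun y _ => mul_nonneg (hg y) (hf _))]
  calc ∑ y, g y * f (x - y)
      ≤ ∑ y, C * h y * f (x - y) :=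
        sum_le_sum fun y _ => mul_le_mul_of_nonneg_right (hgh y) (hf _)
    _ = C * ∑ y, h y * f (x - y) := by simp only [mul_sum, mul_assoc]
    _ ≤ C * ‖∑ y, h y * f (x - y)‖ := by
        gcongr
        exact Real.le_norm_self _

variable (f : (Fin N → ZMod (m + 1)) → ℂ) (x : Fin N → ZMod (m + 1))

lemma one_div_mul_sum_range_sigmaC (L : ℕ) (y : Fin N → ZMod (m + 1)) :
    ((1 / ((L : ℝ) + 1) : ℝ) : ℂ) * ∑ k ∈ range (L + 1), sigmaC m N k y =
      sphereMeanKernel m N L y := by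
  simp only [sigmaC, Nat.cast_inj, sum_ite_eq, mem_range, Nat.lt_succ_iff, card_sphere,
    sphereMeanKernel]
  split_ifs <;> simp

lemma smul_sum_convC_sigmaC (L : ℕ) :
    (1 / ((L : ℝ) + 1)) • ∑ k ∈ range (L + 1), convC (sigmaC m N k) f x =
      convC (fun y => (sphereMeanKernel m N L y : ℂ)) f x := by
  simp only [convC, ← one_div_mul_sum_range_sigmaC]
  rw [sum_comm, Complex.real_smul, mul_sum]
  simp only [← sum_mul, mul_assoc]

lemma smul_integral_noiseOp (P : ℝ) :
    (1 / P) • ∫ p in (0 : ℝ)..P, noiseOp m N p f x =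
      convC (fun y => (noiseMeanKernel m N P y : ℂ)) f x := by
  have integrable_term (y : Fin N → ZMod (m + 1)) :
      IntervalIntegrable (fun p => (noiseDensity m N p y : ℂ) * f (x - y))
        MeasureTheory.volume 0 P :=
    Continuous.intervalIntegrable (by unfold noiseDensity; fun_prop) _ _
  simp only [noiseOp, convC]
  rw [intervalIntegral.integral_finsetSum fun y _ => integrable_term y, smul_sum]
  refine sum_congr rfl fun y _ => ?_
  rw [intervalIntegral.integral_mul_const, intervalIntegral.integral_ofReal, noiseMeanKernel,
    Complex.real_smul, Complex.ofReal_mul, mul_assoc]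

lemma bddAbove_range_norm_smul_integral_noiseOp {c : ℝ} (hc : c ≤ 1) :
    BddAbove (Set.range fun P : Set.Ioc 0 c =>
      ‖(1 / (P : ℝ)) • ∫ p in (0 : ℝ)..(P : ℝ), noiseOp m N p f x‖) := by
  refine ⟨∑ y, ‖f (x - y)‖, ?_⟩
  rintro _ ⟨⟨P, hP₀, hPc⟩, rfl⟩
  simp only [smul_integral_noiseOp]
  refine norm_convC_le_sum_norm (fun y => ?_) f x
  obtain ⟨kernel_nonneg, kernel_le_one⟩ := noiseMeanKernel_mem_Icc ⟨hP₀, hPc.trans hc⟩ y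
  rwa [Complex.norm_real, Real.norm_of_nonneg kernel_nonneg]

end Convolution

theorem statement5_general (m : ℕ) (hm : 1 ≤ m) (N : ℕ) (f : (Fin N → ZMod (m + 1)) → ℝ)
    (hf : ∀ x, 0 ≤ f x) (x : Fin N → ZMod (m + 1)) :
    smoothLocalMax m N (fun y => (f y : ℂ)) x ≤ 4 * reparamMax m N (fun y => (f y : ℂ)) x := by
  have hm : (1 : ℝ) ≤ m := by exact_mod_cast hm
  set c : ℝ := (m : ℝ) / (m + 1) with hc_def
  have hc : 1 / 2 ≤ c := by
    rw [hc_def, div_le_div_iff₀ (by norm_num) (by positivity)]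
    linarith
  have hc₁ : c < 1 := (div_lt_one (by positivity)).2 (lt_add_one _)
  refine sup'_le _ _ fun L hL => ?_
  have hLc : (L : ℝ) ≤ c * N := by
    rw [hc_def, div_mul_eq_mul_div]
    calc (L : ℝ) ≤ (m * N / (m + 1) : ℕ) := by exact_mod_cast Nat.lt_succ_iff.1 (mem_range.1 hL)
      _ ≤ m * N / (m + 1) := by simpa using Nat.cast_div_le (α := ℝ) (m := m * N) (n := m + 1)
  have hP := noiseLevel_mem_Ioc (N := N) (L := L) (by linarith : 0 < c)
  calc 1 / ((L : ℝ) + 1) * ‖∑ k ∈ range (L + 1), convC (sigmaC m N k) (fun y => (f y : ℂ)) x‖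
      = ‖convC (fun y => (sphereMeanKernel m N L y : ℂ)) (fun y => (f y : ℂ)) x‖ := by
        rw [← smul_sum_convC_sigmaC, norm_smul, Real.norm_of_nonneg (by positivity)]
    _ ≤ 4 * ‖convC (fun y => (noiseMeanKernel m N (noiseLevel c N L) y : ℂ))
          (fun y => (f y : ℂ)) x‖ :=
        norm_convC_le_mul_norm_convC (by norm_num) (sphereMeanKernel_nonneg L)
          (sphereMeanKernel_le_four_mul_noiseMeanKernel hc hc₁ hLc) hf x
    _ ≤ 4 * reparamMax m N (fun y => (f y : ℂ)) x := by
        rw [← smul_integral_noiseOp]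
        gcongr
        exact le_ciSup (bddAbove_range_norm_smul_integral_noiseOp _ x hc₁.le) ⟨_, hP⟩

theorem statement5 (m : ℕ) (hm : 2 ≤ m) :
    ∃ C : ℝ, ∀ N : ℕ, 1 ≤ N → ∀ f : (Fin N → ZMod (m + 1)) → ℝ, (∀ x, 0 ≤ f x) →
      ∀ x, smoothLocalMax m N (fun y => (f y : ℂ)) x ≤
        C * reparamMax m N (fun y => (f y : ℂ)) x := by
  exact ⟨4, fun N _ => statement5_general m (one_le_two.trans hm) N⟩
end
end

section
/- There exists a constant C = C(m) > 0, independent of N, such that for all integers 0 ≤ l ≤ L ≤ c_m·N the following holds: setting P(L) = 1/N if L = 0 and P(L) = L/N if L ≥ 1, one has 1/(L+1) ≤ (C/P(L)) · ∫_0^{P(L)} B(N,p,l) dp. -/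
noncomputable section

/-- The binomial probability mass `B(N,p,l) = C(N,l) p^l (1-p)^{N-l}`. -/
def binomMass (N : ℕ) (p : ℝ) (l : ℕ) : ℝ :=
  (N.choose l : ℝ) * p ^ l * (1 - p) ^ (N - l)

/-- The cutoff `P(L)`: `1/N` if `L = 0` and `L/N` if `L ≥ 1`. -/
def PofL (N L : ℕ) : ℝ := if L = 0 then 1 / N else (L : ℝ) / N

open Finset
open scoped Nat

/-!
For `l ≥ 1` put `x = l/N`; then `l` is the most likely value of a binomial variable with parameters
`N` and `x`. By Chebyshev's inequality half of the mass of that variable sits on `O(√l)` values, so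
`B(N,x,l) ≥ 1/(8√l)`. Moreover `B(N,p,l) ≥ B(N,x,l) exp (-χ²)` with `χ² = N(x-p)²/(p(1-p))`, which
stays bounded for `x - √l/(2N) ≤ p ≤ x` as long as `x` is bounded away from `1`. Integrating over
this window gives a multiple of `√l/N · 1/√l = 1/N`. For `l = 0`, Bernoulli's inequality gives the
same order of magnitude on `[0, 1/N]`.
-/

section BinomialMass

variable {N : ℕ} {p : ℝ}

lemma binomMass_nonneg (N l : ℕ) (hp0 : 0 ≤ p) (hp1 : p ≤ 1) : 0 ≤ binomMass N p l := by
  have : 0 ≤ 1 - p := sub_nonneg.mpr hp1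
  unfold binomMass
  positivity

lemma continuous_binomMass (N l : ℕ) : Continuous fun p ↦ binomMass N p l := by
  unfold binomMass
  fun_prop

lemma eval_bernsteinPolynomial (N l : ℕ) (p : ℝ) :
    (bernsteinPolynomial ℝ N l).eval p = binomMass N p l := by
  simp [bernsteinPolynomial, binomMass]

lemma sum_binomMass (N : ℕ) (p : ℝ) : ∑ k ∈ range (N + 1), binomMass N p k = 1 := by
  simpa [Polynomial.eval_finsetSum, eval_bernsteinPolynomial] using
    congrArg (Polynomial.eval p) (bernsteinPolynomial.sum ℝ N)

lemma sum_sq_sub_mul_binomMass (N : ℕ) (p : ℝ) :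
    ∑ k ∈ range (N + 1), (N * p - k) ^ 2 * binomMass N p k = N * p * (1 - p) := by
  simpa [Polynomial.eval_finsetSum, eval_bernsteinPolynomial] using
    congrArg (Polynomial.eval p) (bernsteinPolynomial.variance ℝ N)

lemma one_sub_variance_div_sq_le_sum_binomMass {R : ℝ} (hp0 : 0 ≤ p) (hp1 : p ≤ 1) (hR : 0 < R) :
    1 - N * p * (1 - p) / R ^ 2 ≤
      ∑ k ∈ range (N + 1) with |N * p - (k : ℕ)| < R, binomMass N p k := by
  have mass_nonneg (k : ℕ) : 0 ≤ binomMass N p k := binomMass_nonneg N k hp0 hp1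
  have far_mass : ∑ k ∈ range (N + 1) with ¬|N * p - (k : ℕ)| < R, binomMass N p k ≤
      N * p * (1 - p) / R ^ 2 :=
    calc ∑ k ∈ range (N + 1) with ¬|N * p - (k : ℕ)| < R, binomMass N p k
        ≤ ∑ k ∈ range (N + 1) with ¬|N * p - (k : ℕ)| < R,
            (N * p - k) ^ 2 * binomMass N p k / R ^ 2 := by
          refine sum_le_sum fun k hk ↦ ?_
          have far : R ≤ |N * p - k| := not_lt.mp (mem_filter.mp hk).2
          rw [le_div_iff₀ (by positivity), mul_comm, ← sq_abs (N * p - k)]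
          gcongr
          exact mass_nonneg k
      _ ≤ ∑ k ∈ range (N + 1), (N * p - k) ^ 2 * binomMass N p k / R ^ 2 :=
          sum_le_sum_of_subset_of_nonneg (filter_subset _ _) fun k _ _ ↦ by
            have := mass_nonneg k
            positivity
      _ = N * p * (1 - p) / R ^ 2 := by rw [← sum_div, sum_sq_sub_mul_binomMass]
  have split := sum_filter_add_sum_filter_not (range (N + 1)) (fun k : ℕ ↦ |N * p - k| < R)
    (binomMass N p)
  rw [sum_binomMass] at split
  linarith

lemma integral_binomMass_mono_interval {a b a' b' : ℝ} (N l : ℕ) (ha' : 0 ≤ a') (haa' : a' ≤ a)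
    (hab : a ≤ b) (hbb' : b ≤ b') (hb' : b' ≤ 1) :
    ∫ p in a..b, binomMass N p l ≤ ∫ p in a'..b', binomMass N p l := by
  refine intervalIntegral.integral_mono_interval haa' hab hbb' ?_
    ((continuous_binomMass N l).intervalIntegrable _ _)
  filter_upwards [MeasureTheory.ae_restrict_mem measurableSet_Ioc] with p hp
  exact binomMass_nonneg N l (ha'.trans hp.1.le) (hp.2.trans hb')

end BinomialMass

section Mode

lemma pow_mul_factorial_le_pow_self_mul_factorial (a k : ℕ) : a ^ k * a ! ≤ a ^ a * k ! := by
  rcases le_total a k with hak | hka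
  · calc a ^ k * a ! = a ^ a * (a ! * a ^ (k - a)) := by
          rw [← Nat.add_sub_cancel' hak, pow_add, Nat.add_sub_cancel_left]; ring
      _ ≤ a ^ a * k ! := by gcongr; exact Nat.factorial_mul_pow_sub_le_factorial hak
  · calc a ^ k * a ! = a ^ k * (k ! * a.descFactorial (a - k)) := by
          rw [← Nat.factorial_mul_descFactorial (Nat.sub_le a k), Nat.sub_sub_self hka]
      _ ≤ a ^ k * (k ! * a ^ (a - k)) := by gcongr; exact Nat.descFactorial_le_pow a _
      _ = a ^ a * k ! := by
          rw [mul_left_comm, ← pow_add, Nat.add_sub_cancel' hka, mul_comm]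

/-- The binomial weights are products of two Poisson weights `a ^ i / i !` and `b ^ j / j !`, which
are maximal at `i = a` and `j = b`. -/
lemma choose_mul_pow_mul_pow_le {a b i j : ℕ} (h : i + j = a + b) :
    (a + b).choose i * a ^ i * b ^ j ≤ (a + b).choose a * a ^ a * b ^ b := by
  have choose_i : (a + b).choose i * (i ! * j !) = (a + b)! := by
    rw [← h, ← mul_assoc, Nat.choose_symm_add, Nat.add_choose_mul_factorial_mul_factorial]
  have choose_a : (a + b).choose a * (a ! * b !) = (a + b)! := by
    rw [← mul_assoc, Nat.choose_symm_add, Nat.add_choose_mul_factorial_mul_factorial]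
  refine Nat.le_of_mul_le_mul_right (c := i ! * j ! * (a ! * b !)) ?_ (by positivity)
  calc (a + b).choose i * a ^ i * b ^ j * (i ! * j ! * (a ! * b !))
      = (a + b).choose i * (i ! * j !) * ((a ^ i * a !) * (b ^ j * b !)) := by ring
    _ ≤ (a + b)! * ((a ^ a * i !) * (b ^ b * j !)) := by
        rw [choose_i]
        gcongr _ * (?_ * ?_) <;> apply pow_mul_factorial_le_pow_self_mul_factorial
    _ = (a + b).choose a * a ^ a * b ^ b * (i ! * j ! * (a ! * b !)) := by
        rw [← choose_a]; ring

variable {N l : ℕ}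

lemma binomMass_div_eq {k : ℕ} (hN : N ≠ 0) (hl : l ≤ N) (hk : k ≤ N) :
    binomMass N (l / N) k = (N.choose k * l ^ k * (N - l) ^ (N - k) : ℕ) / (N : ℝ) ^ N := by
  have one_sub_div : 1 - (l : ℝ) / N = ((N - l : ℕ) : ℝ) / N := by
    rw [Nat.cast_sub hl]; field_simp
  have pow_split : (N : ℝ) ^ N = N ^ k * N ^ (N - k) := by
    rw [← pow_add, Nat.add_sub_cancel' hk]
  rw [binomMass, one_sub_div, pow_split]
  push_cast
  simp only [div_pow]
  field_simp

lemma binomMass_le_mode {k : ℕ} (hN : N ≠ 0) (hl : l ≤ N) (hk : k ≤ N) :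
    binomMass N (l / N) k ≤ binomMass N (l / N) l := by
  rw [binomMass_div_eq hN hl hk, binomMass_div_eq hN hl hl]
  have h := choose_mul_pow_mul_pow_le (a := l) (b := N - l) (i := k) (j := N - k) (by omega)
  rw [Nat.add_sub_cancel' hl] at h
  gcongr

lemma one_sub_variance_div_sq_le_mul_mode (hN : N ≠ 0) (hl : l ≤ N) (r : ℕ) :
    1 - l * (1 - l / N) / ((r : ℝ) + 1) ^ 2 ≤ (2 * r + 1) * binomMass N (l / N) l := by
  set x : ℝ := l / N
  have hx0 : 0 ≤ x := by positivity
  have hx1 : x ≤ 1 := div_le_one_of_le₀ (by exact_mod_cast hl) N.cast_nonneg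
  have mean : N * x = l := mul_div_cancel₀ _ (by exact_mod_cast hN)
  have near_card : #{k ∈ range (N + 1) | |N * x - (k : ℕ)| < (r : ℝ) + 1} ≤ 2 * r + 1 := by
    have near_subset : {k ∈ range (N + 1) | |N * x - (k : ℕ)| < (r : ℝ) + 1} ⊆
        Icc (l - r) (l + r) := fun k hk ↦ by
      obtain ⟨hlow, hupp⟩ := abs_lt.mp (mem_filter.mp hk).2
      rw [mean] at hlow hupp
      have : l < k + r + 1 := by exact_mod_cast (by linarith : (l : ℝ) < k + r + 1)
      have : k < l + r + 1 := by exact_mod_cast (by linarith : (k : ℝ) < l + r + 1)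
      rw [mem_Icc]
      omega
    calc _ ≤ #(Icc (l - r) (l + r)) := card_le_card near_subset
      _ ≤ 2 * r + 1 := by rw [Nat.card_Icc]; omega
  calc 1 - l * (1 - x) / ((r : ℝ) + 1) ^ 2
      ≤ ∑ k ∈ range (N + 1) with |N * x - (k : ℕ)| < (r : ℝ) + 1, binomMass N x k := by
        rw [← mean]
        exact one_sub_variance_div_sq_le_sum_binomMass hx0 hx1 (by positivity)
    _ ≤ #{k ∈ range (N + 1) | |N * x - (k : ℕ)| < (r : ℝ) + 1} • binomMass N x l :=
        sum_le_card_nsmul _ _ _ fun k hk ↦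
          binomMass_le_mode hN hl (mem_range_succ_iff.mp (mem_filter.mp hk).1)
    _ ≤ (2 * r + 1) * binomMass N x l := by
        rw [nsmul_eq_mul]
        gcongr
        · exact binomMass_nonneg N l hx0 hx1
        · exact_mod_cast near_card

lemma one_div_eight_sqrt_le_mode (hl : 1 ≤ l) (hlN : l ≤ N) :
    1 / (8 * √l) ≤ binomMass N (l / N) l := by
  set r := Nat.sqrt (2 * l)
  have hl' : (1 : ℝ) ≤ √l := Real.one_le_sqrt.mpr (by exact_mod_cast hl)
  have sqrt_sq : √l ^ 2 = l := Real.sq_sqrt l.cast_nonneg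
  have r_upper : 2 * (r : ℝ) ≤ 3 * √l := by
    have : (r : ℝ) ^ 2 ≤ 2 * l := by exact_mod_cast Nat.sqrt_le' (2 * l)
    nlinarith
  have r_lower : 2 * (l : ℝ) ≤ ((r : ℝ) + 1) ^ 2 := by
    exact_mod_cast (Nat.lt_succ_sqrt' (2 * l)).le
  have variance_le : (l : ℝ) * (1 - l / N) / ((r : ℝ) + 1) ^ 2 ≤ 1 / 2 := by
    rw [div_le_iff₀ (by positivity)]
    have : (l : ℝ) * (1 - l / N) ≤ l :=
      mul_le_of_le_one_right l.cast_nonneg (sub_le_self _ (by positivity))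
    linarith
  have half_le : 1 / 2 ≤ (2 * r + 1) * binomMass N (l / N) l := by
    linarith [one_sub_variance_div_sq_le_mul_mode (by omega) hlN r]
  have mode_nonneg : 0 ≤ binomMass N (l / N) l :=
    binomMass_nonneg N l (by positivity) (div_le_one_of_le₀ (by exact_mod_cast hlN) N.cast_nonneg)
  have card_mul_le : (2 * r + 1) * binomMass N (l / N) l ≤ 4 * √l * binomMass N (l / N) l :=
    mul_le_mul_of_nonneg_right (by linarith) mode_nonneg
  rw [div_le_iff₀ (by positivity)]
  linarith

end Mode

section Integral

variable {N l : ℕ} {p x c : ℝ}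

lemma pow_mul_exp_le_pow (hx : 0 ≤ x) (hp : 0 < p) (n : ℕ) :
    x ^ n * Real.exp (n * (1 - x / p)) ≤ p ^ n := by
  have base : x * Real.exp (1 - x / p) ≤ p := by
    have h : x / p ≤ Real.exp (x / p - 1) := by linarith [Real.add_one_le_exp (x / p - 1)]
    rw [div_le_iff₀ hp] at h
    calc x * Real.exp (1 - x / p)
        ≤ Real.exp (x / p - 1) * p * Real.exp (1 - x / p) := by gcongr
      _ = p := by rw [mul_right_comm, ← Real.exp_add]; simp
  rw [Real.exp_nat_mul, ← mul_pow]
  gcongr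

lemma binomMass_mul_exp_le (hx0 : 0 ≤ x) (hx1 : x ≤ 1) (hp0 : 0 < p) (hp1 : p < 1)
    (hNx : N * x = l) :
    binomMass N x l * Real.exp (-(N * (x - p) ^ 2 / (p * (1 - p)))) ≤ binomMass N p l := by
  have hq0 : 0 < 1 - p := sub_pos.mpr hp1
  have hy0 : 0 ≤ 1 - x := sub_nonneg.mpr hx1
  have hlN : l ≤ N := by
    have : (l : ℝ) ≤ N := hNx ▸ mul_le_of_le_one_right N.cast_nonneg hx1
    exact_mod_cast this
  have exponent : -(N * (x - p) ^ 2 / (p * (1 - p))) =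
      l * (1 - x / p) + (N - l : ℕ) * (1 - (1 - x) / (1 - p)) := by
    rw [Nat.cast_sub hlN, ← hNx]
    field_simp
    ring
  calc binomMass N x l * Real.exp (-(N * (x - p) ^ 2 / (p * (1 - p))))
      = N.choose l * (x ^ l * Real.exp (l * (1 - x / p))) *
          ((1 - x) ^ (N - l) * Real.exp ((N - l : ℕ) * (1 - (1 - x) / (1 - p)))) := by
        rw [exponent, Real.exp_add, binomMass]; ring
    _ ≤ N.choose l * p ^ l * (1 - p) ^ (N - l) := by
        gcongr
        · exact pow_mul_exp_le_pow hx0 hp0 l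
        · exact pow_mul_exp_le_pow hy0 hq0 (N - l)

lemma cast_pos_of_one_le_of_le_mul (hl : 1 ≤ l) (hlc : (l : ℝ) ≤ c * N) : (0 : ℝ) < N := by
  have hl' : (1 : ℝ) ≤ l := by exact_mod_cast hl
  exact N.cast_nonneg.lt_of_ne' fun hN ↦ by rw [hN] at hlc; linarith

lemma sqrt_div_two_mul_le_half (hl : 1 ≤ l) (N : ℕ) : √l / (2 * N) ≤ (l : ℝ) / N / 2 := by
  rw [div_div, mul_comm (N : ℝ)]
  gcongr
  exact Real.sqrt_le_self_iff.mpr (.inr (by exact_mod_cast hl))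

lemma exp_div_le_binomMass (hc : c < 1) (hl : 1 ≤ l) (hlc : (l : ℝ) ≤ c * N)
    (hpl : l / N - √l / (2 * N) ≤ p) (hpr : p ≤ l / N) :
    Real.exp (-(1 / (2 * (1 - c)))) / (8 * √l) ≤ binomMass N p l := by
  have hN : (0 : ℝ) < N := cast_pos_of_one_le_of_le_mul hl hlc
  have hxc : (l : ℝ) / N ≤ c := (div_le_iff₀ hN).mpr hlc
  have hlN : l ≤ N := by
    have : (l : ℝ) ≤ N := (div_le_one hN).mp (hxc.trans hc.le)
    exact_mod_cast this
  have hxp : (l : ℝ) / N / 2 ≤ p := by linarith [sqrt_div_two_mul_le_half hl N]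
  have hp0 : 0 < p := lt_of_lt_of_le (by positivity) hxp
  have hpc : 1 - c ≤ 1 - p := by linarith
  have hc0 : 0 < 1 - c := sub_pos.mpr hc
  have chi_sq_le : N * (l / N - p) ^ 2 / (p * (1 - p)) ≤ 1 / (2 * (1 - c)) :=
    calc N * (l / N - p) ^ 2 / (p * (1 - p))
        ≤ N * (√l / (2 * N)) ^ 2 / (l / N / 2 * (1 - c)) := by
          gcongr
          linarith
      _ = 1 / (2 * (1 - c)) := by
          rw [div_pow, Real.sq_sqrt l.cast_nonneg]
          field_simp
  calc Real.exp (-(1 / (2 * (1 - c)))) / (8 * √l)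
      = 1 / (8 * √l) * Real.exp (-(1 / (2 * (1 - c)))) := by ring
    _ ≤ binomMass N (l / N) l * Real.exp (-(N * (l / N - p) ^ 2 / (p * (1 - p)))) := by
        have mode_ge := one_div_eight_sqrt_le_mode hl hlN
        have : 0 ≤ binomMass N (l / N) l := le_trans (by positivity) mode_ge
        gcongr
    _ ≤ binomMass N p l := binomMass_mul_exp_le (by positivity) (by linarith) hp0 (by linarith)
        (mul_div_cancel₀ _ hN.ne')

lemma exp_div_le_integral_binomMass (hc : c < 1) (hl : 1 ≤ l) (hlc : (l : ℝ) ≤ c * N) :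
    Real.exp (-(1 / (2 * (1 - c)))) / (16 * N) ≤ ∫ p in (0 : ℝ)..(l / N), binomMass N p l := by
  have hN : (0 : ℝ) < N := cast_pos_of_one_le_of_le_mul hl hlc
  have hx1 : (l : ℝ) / N ≤ 1 := ((div_le_iff₀ hN).mpr hlc).trans hc.le
  have window_nonneg : 0 ≤ (l : ℝ) / N - √l / (2 * N) := by
    linarith [sqrt_div_two_mul_le_half hl N, div_nonneg l.cast_nonneg hN.le]
  have window_le : (l : ℝ) / N - √l / (2 * N) ≤ l / N := sub_le_self _ (by positivity)
  calc Real.exp (-(1 / (2 * (1 - c)))) / (16 * N)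
      = ∫ _ in (l / N - √l / (2 * N) : ℝ)..(l / N),
          Real.exp (-(1 / (2 * (1 - c)))) / (8 * √l) := by
        rw [intervalIntegral.integral_const, sub_sub_cancel, smul_eq_mul]
        field_simp
        norm_num
    _ ≤ ∫ p in (l / N - √l / (2 * N) : ℝ)..(l / N), binomMass N p l :=
        intervalIntegral.integral_mono_on window_le intervalIntegrable_const
          ((continuous_binomMass N l).intervalIntegrable _ _)
          fun p hp ↦ exp_div_le_binomMass hc hl hlc hp.1 hp.2
    _ ≤ ∫ p in (0 : ℝ)..(l / N), binomMass N p l :=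
        integral_binomMass_mono_interval N l le_rfl window_nonneg window_le le_rfl hx1

lemma one_div_two_mul_le_integral_binomMass_zero (hN : 1 ≤ N) :
    1 / (2 * N : ℝ) ≤ ∫ p in (0 : ℝ)..(1 / N), binomMass N p 0 := by
  have integral_linear : ∫ p in (0 : ℝ)..(1 / N), (1 - N * p) = 1 / (2 * N : ℝ) := by
    rw [intervalIntegral.integral_sub (by simp)
      (Continuous.intervalIntegrable (by fun_prop) _ _), intervalIntegral.integral_const_mul]
    simp only [intervalIntegral.integral_const, integral_id, smul_eq_mul]
    field_simp
    ring
  rw [← integral_linear]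
  refine intervalIntegral.integral_mono_on (by positivity)
    (Continuous.intervalIntegrable (by fun_prop) _ _)
    ((continuous_binomMass N 0).intervalIntegrable _ _) fun p hp ↦ ?_
  have hp1 : p ≤ 1 := hp.2.trans (by simpa using N.cast_inv_le_one)
  simpa [binomMass, sub_eq_add_neg] using one_add_mul_le_pow (a := -p) (by linarith) N

end Integral

section Cutoff

variable {N : ℕ}

lemma PofL_eq_max_div (N L : ℕ) : PofL N L = max (L : ℝ) 1 / N := by
  rcases Nat.eq_zero_or_pos L with rfl | hL
  · simp [PofL]
  · rw [PofL, if_neg hL.ne', max_eq_left (by exact_mod_cast hL)]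

lemma PofL_mono (N : ℕ) : Monotone (PofL N) := fun l L hlL ↦ by
  simp only [PofL_eq_max_div]
  gcongr

lemma PofL_nonneg (N L : ℕ) : 0 ≤ PofL N L := by
  rw [PofL_eq_max_div]
  positivity

lemma PofL_le_one {L : ℕ} (hN : 1 ≤ N) (hL : L ≤ N) : PofL N L ≤ 1 := by
  rw [PofL_eq_max_div]
  exact div_le_one_of_le₀ (max_le (by exact_mod_cast hL) (by exact_mod_cast hN)) N.cast_nonneg

lemma exp_div_le_integral_binomMass_PofL {l : ℕ} {c : ℝ} (hc : c < 1) (hN : 1 ≤ N)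
    (hlc : (l : ℝ) ≤ c * N) :
    Real.exp (-(1 / (2 * (1 - c)))) / (16 * N) ≤
      ∫ p in (0 : ℝ)..(PofL N l), binomMass N p l := by
  rcases Nat.eq_zero_or_pos l with rfl | hl
  · have exponent_nonpos : -(1 / (2 * (1 - c))) ≤ 0 :=
      neg_nonpos.mpr (one_div_nonneg.mpr (by linarith))
    calc Real.exp (-(1 / (2 * (1 - c)))) / (16 * N) ≤ 1 / (2 * N) := by
          gcongr
          · exact Real.exp_le_one_iff.mpr exponent_nonpos
          · norm_num
      _ ≤ ∫ p in (0 : ℝ)..(PofL N 0), binomMass N p 0 := by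
          simpa only [PofL, if_true] using one_div_two_mul_le_integral_binomMass_zero hN
  · simpa only [PofL, if_neg hl.ne'] using exp_div_le_integral_binomMass hc hl hlc

end Cutoff

theorem statement6_general (c : ℝ) (hc : c < 1) :
    ∃ C : ℝ, 0 < C ∧ ∀ N : ℕ, 1 ≤ N → ∀ l L : ℕ, l ≤ L → (L : ℝ) ≤ c * N →
      1 / ((L : ℝ) + 1) ≤ (C / PofL N L) * ∫ p in (0 : ℝ)..(PofL N L), binomMass N p l := by
  set δ := Real.exp (-(1 / (2 * (1 - c))))
  have hδ : 0 < δ := Real.exp_pos _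
  refine ⟨16 / δ, by positivity, fun N hN l L hlL hLc ↦ ?_⟩
  have hN' : (0 : ℝ) < N := by exact_mod_cast hN
  have hLN : L ≤ N := by
    exact_mod_cast hLc.trans (mul_le_of_le_one_left hN'.le hc.le)
  have hlc : (l : ℝ) ≤ c * N := le_trans (by exact_mod_cast hlL) hLc
  have integral_ge : δ / (16 * N) ≤ ∫ p in (0 : ℝ)..(PofL N L), binomMass N p l :=
    (exp_div_le_integral_binomMass_PofL hc hN hlc).trans <|
      integral_binomMass_mono_interval N l le_rfl le_rfl (PofL_nonneg N l) (PofL_mono N hlL)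
        (PofL_le_one hN hLN)
  calc 1 / ((L : ℝ) + 1) ≤ 1 / max (L : ℝ) 1 := by
        gcongr
        exact max_le (by linarith) (by linarith [L.cast_nonneg (α := ℝ)])
    _ = 16 / δ / PofL N L * (δ / (16 * N)) := by
        have : 0 < max (L : ℝ) 1 := by positivity
        rw [PofL_eq_max_div]
        field_simp
    _ ≤ 16 / δ / PofL N L * ∫ p in (0 : ℝ)..(PofL N L), binomMass N p l := by
        have := PofL_nonneg N L
        gcongr

theorem statement6 (m : ℕ) (hm : 2 ≤ m) :
    ∃ C : ℝ, 0 < C ∧ ∀ N : ℕ, 1 ≤ N → ∀ l L : ℕ, l ≤ L → (L : ℝ) ≤ (m : ℝ) / (m + 1) * N →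
      1 / ((L : ℝ) + 1) ≤ (C / PofL N L) * ∫ p in (0 : ℝ)..(PofL N L), binomMass N p l :=
  statement6_general _ ((div_lt_one (by positivity)).mpr (lt_add_one _))
end
end

section
/- For every integer m ≥ 2 and every real p > 1 there exists a constant C = C(p,m), independent of N, such that for every integer N ≥ 1 and every f : G → ℂ, ‖M_S^L f‖_{L^p(G)} ≤ C · ‖f‖_{L^p(G)}. -/
open Finset

noncomputable section

/-!
The simple random walk on the Hamming graph is doubly stochastic, so by the Hopf–Dunford–Schwartz
maximal theorem its ergodic maximal function is bounded on `ℓ^p` with constant `p / (p - 1)`,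
whatever `m` and `N` are. Started at `0`, the walk moves away from `0` at nearly unit speed as long
as `L` is small compared with `c_m N`: after `4 (L + 1)` steps it has weight larger than `L` with
probability at least `1 / 4`. Since the weight grows by at most one per step, the walk has then
visited every sphere of radius `k ≤ L`; as its distribution is radial, this gives
`σ_0 + ⋯ + σ_L ≤ 4 (μ_0 + ⋯ + μ_{4L+3})` for the distributions `μ_j` after `j` steps. The remaining
`L` are comparable to the largest admissible radius, and all their means are dominated by a single
convolution with a probability measure.
-/

section WeakToStrong

variable {ι : Type*} [Fintype ι] {p : ℝ} {f F : ι → ℝ}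

theorem integrableOn_rpow_mul_sub {a : ℝ} (ha : 0 ≤ a) (c : ℝ) (hp : 1 < p) :
    MeasureTheory.IntegrableOn (fun t : ℝ => c * t ^ (p - 2) - t ^ (p - 1)) (Set.Ioo 0 a) :=
  (intervalIntegrable_iff_integrableOn_Ioo_of_le ha).1 <|
    ((intervalIntegral.intervalIntegrable_rpow' (by linarith)).const_mul c).sub
      (intervalIntegral.intervalIntegrable_rpow' (by linarith))

theorem setIntegral_rpow_mul_sub {a : ℝ} (ha : 0 ≤ a) (c : ℝ) (hp : 1 < p) :
    ∫ t in Set.Ioo 0 a, (c * t ^ (p - 2) - t ^ (p - 1)) =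
      c * a ^ (p - 1) / (p - 1) - a ^ p / p := by
  rw [← MeasureTheory.integral_Ioc_eq_integral_Ioo, ← intervalIntegral.integral_of_le ha,
    intervalIntegral.integral_sub
      ((intervalIntegral.intervalIntegrable_rpow' (by linarith)).const_mul c)
      (intervalIntegral.intervalIntegrable_rpow' (by linarith)),
    intervalIntegral.integral_const_mul, integral_rpow (Or.inl (by linarith)),
    integral_rpow (Or.inl (by linarith)), show p - 2 + 1 = p - 1 by ring, sub_add_cancel,
    Real.zero_rpow (by linarith), Real.zero_rpow (by linarith), sub_zero, sub_zero, mul_div_assoc]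

/- Integrate the hypothesis against `t ^ (p - 2) dt`. -/
theorem sum_rpow_le_mul_sum_mul_rpow (hp : 1 < p) (hF : 0 ≤ F)
    (hlevel : ∀ t > 0, 0 ≤ ∑ x with t < F x, (f x - t)) :
    ∑ x, F x ^ p ≤ p / (p - 1) * ∑ x, f x * F x ^ (p - 1) := by
  have hlayer (t : ℝ) : 0 ≤ ∑ x, (Set.Ioo 0 (F x)).indicator
      (fun t => f x * t ^ (p - 2) - t ^ (p - 1)) t := by
    rcases le_or_gt t 0 with ht | ht
    · exact (sum_eq_zero fun x _ => Set.indicator_of_notMem (by simp [ht.not_gt]) _).ge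
    · have hpow : t ^ (p - 1) = t ^ (p - 2) * t := by
        rw [← Real.rpow_add_one ht.ne']; ring_nf
      calc 0 ≤ t ^ (p - 2) * ∑ x with t < F x, (f x - t) :=
            mul_nonneg (Real.rpow_nonneg ht.le _) (hlevel t ht)
        _ = _ := by
            rw [sum_filter, mul_sum]
            refine sum_congr rfl fun x _ => ?_
            simp only [Set.indicator, Set.mem_Ioo, ht, true_and, hpow]
            split_ifs <;> ring
  have hintegral : 0 ≤ ∑ x, (f x * F x ^ (p - 1) / (p - 1) - F x ^ p / p) := by
    simp_rw [← fun x => setIntegral_rpow_mul_sub (hF x) (f x) hp,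
      ← MeasureTheory.integral_indicator measurableSet_Ioo]
    rw [← MeasureTheory.integral_finsetSum _ fun x _ =>
      (integrableOn_rpow_mul_sub (hF x) (f x) hp).integrable_indicator measurableSet_Ioo]
    exact MeasureTheory.integral_nonneg hlayer
  rw [sum_sub_distrib, ← sum_div, ← sum_div, sub_nonneg, div_le_iff₀ (by linarith)] at hintegral
  exact hintegral.trans_eq (by ring)

theorem rpow_sum_rpow_le_of_sum_rpow_le {c : ℝ} (hp : 1 < p) (hc : 0 ≤ c) (hf : 0 ≤ f)
    (hF : 0 ≤ F) (h : ∑ x, F x ^ p ≤ c * ∑ x, f x * F x ^ (p - 1)) :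
    (∑ x, F x ^ p) ^ (1 / p) ≤ c * (∑ x, f x ^ p) ^ (1 / p) := by
  have hpq : p.HolderConjugate (p / (p - 1)) := Real.HolderConjugate.conjExponent hp
  have holder := Real.inner_le_Lp_mul_Lq_of_nonneg univ hpq (fun x _ => hf x)
    fun x _ => Real.rpow_nonneg (hF x) (p - 1)
  have hpow (x : ι) : (F x ^ (p - 1)) ^ (p / (p - 1)) = F x ^ p := by
    rw [← Real.rpow_mul (hF x), mul_div_cancel₀ _ (sub_ne_zero.2 hp.ne')]
  simp only [hpow] at holder
  set S := ∑ x, F x ^ p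
  have hS : 0 ≤ S := sum_nonneg fun x _ => Real.rpow_nonneg (hF x) _
  rcases hS.eq_or_lt with hS | hS
  · rw [← hS, Real.zero_rpow (one_div_pos.2 hpq.pos).ne']
    exact mul_nonneg hc (Real.rpow_nonneg (sum_nonneg fun x _ => Real.rpow_nonneg (hf x) _) _)
  · refine le_of_mul_le_mul_right ?_ (Real.rpow_pos_of_pos hS (1 / (p / (p - 1))))
    calc S ^ (1 / p) * S ^ (1 / (p / (p - 1))) = S := by
          rw [← Real.rpow_add hS, one_div, one_div, hpq.inv_add_inv_eq_one, Real.rpow_one]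
      _ ≤ c * ((∑ x, f x ^ p) ^ (1 / p) * S ^ (1 / (p / (p - 1)))) :=
          h.trans (mul_le_mul_of_nonneg_left holder hc)
      _ = _ := (mul_assoc _ _ _).symm

theorem rpow_sum_rpow_le_of_sum_sub_nonneg (hp : 1 < p) (hf : 0 ≤ f) (hF : 0 ≤ F)
    (hlevel : ∀ t > 0, 0 ≤ ∑ x with t < F x, (f x - t)) :
    (∑ x, F x ^ p) ^ (1 / p) ≤ p / (p - 1) * (∑ x, f x ^ p) ^ (1 / p) :=
  rpow_sum_rpow_le_of_sum_rpow_le hp (div_nonneg (by linarith) (by linarith)) hf hF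
    (sum_rpow_le_mul_sum_mul_rpow hp hF hlevel)

end WeakToStrong

section ConvolutionNorms

variable {ι : Type*} [Fintype ι] {p : ℝ}

theorem sum_mul_rpow_le_sum_mul_rpow {w g : ι → ℝ} (hp : 1 ≤ p) (hw_nonneg : 0 ≤ w)
    (hw_sum : ∑ y, w y ≤ 1) (hg : 0 ≤ g) : (∑ y, w y * g y) ^ p ≤ ∑ y, w y * g y ^ p := by
  have hp_pos : 0 < p := zero_lt_one.trans_le hp
  have hsum_nonneg : 0 ≤ ∑ y, w y * g y ^ p :=
    sum_nonneg fun y _ => mul_nonneg (hw_nonneg y) (Real.rpow_nonneg (hg y) p)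
  have hmass : (∑ y, w y) ^ (1 - p⁻¹) ≤ 1 :=
    Real.rpow_le_one (sum_nonneg fun y _ => hw_nonneg y) hw_sum
      (sub_nonneg.2 (inv_le_one_of_one_le₀ hp))
  rw [← Real.le_rpow_inv_iff_of_pos (sum_nonneg fun y _ => mul_nonneg (hw_nonneg y) (hg y))
    hsum_nonneg hp_pos]
  exact (Real.inner_le_weight_mul_Lp_of_nonneg univ hp w g hw_nonneg hg).trans
    (mul_le_of_le_one_left (Real.rpow_nonneg hsum_nonneg _) hmass)

theorem rpow_sum_conv_rpow_le {G : Type*} [Fintype G] [AddCommGroup G] {w g : G → ℝ} (hp : 1 ≤ p)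
    (hw_nonneg : 0 ≤ w) (hw_sum : ∑ y, w y ≤ 1) (hg : 0 ≤ g) :
    (∑ x, (∑ y, w y * g (x - y)) ^ p) ^ (1 / p) ≤ (∑ x, g x ^ p) ^ (1 / p) := by
  have hconv_nonneg (x : G) : 0 ≤ ∑ y, w y * g (x - y) :=
    sum_nonneg fun y _ => mul_nonneg (hw_nonneg y) (hg _)
  refine Real.rpow_le_rpow (sum_nonneg fun x _ => Real.rpow_nonneg (hconv_nonneg x) p) ?_
    (by positivity)
  calc ∑ x, (∑ y, w y * g (x - y)) ^ p
      ≤ ∑ x, ∑ y, w y * g (x - y) ^ p :=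
        sum_le_sum fun x _ => sum_mul_rpow_le_sum_mul_rpow hp hw_nonneg hw_sum fun y => hg (x - y)
    _ = (∑ y, w y) * ∑ x, g x ^ p := by
        rw [sum_comm, sum_mul]
        refine sum_congr rfl fun y _ => ?_
        rw [← mul_sum, ← Equiv.sum_comp (Equiv.subRight y) fun x => g x ^ p]
        rfl
    _ ≤ ∑ x, g x ^ p :=
        mul_le_of_le_one_left (sum_nonneg fun x _ => Real.rpow_nonneg (hg x) p) hw_sum

theorem rpow_sum_mul_rpow {c : ℝ} {g : ι → ℝ} (hp : p ≠ 0) (hc : 0 ≤ c) (hg : 0 ≤ g) :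
    (∑ x, (c * g x) ^ p) ^ (1 / p) = c * (∑ x, g x ^ p) ^ (1 / p) := by
  simp only [fun x => Real.mul_rpow hc (hg x) (z := p)]
  rw [← mul_sum, Real.mul_rpow (Real.rpow_nonneg hc p)
    (sum_nonneg fun x _ => Real.rpow_nonneg (hg x) p), one_div, Real.rpow_rpow_inv hc hp]

theorem rpow_sum_rpow_le_of_le_add {a b : ℝ} {F u v : ι → ℝ} (hp : 1 ≤ p) (ha : 0 ≤ a) (hb : 0 ≤ b)
    (hF : 0 ≤ F) (hu : 0 ≤ u) (hv : 0 ≤ v) (hle : ∀ x, F x ≤ a * u x + b * v x) :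
    (∑ x, F x ^ p) ^ (1 / p) ≤
      a * (∑ x, u x ^ p) ^ (1 / p) + b * (∑ x, v x ^ p) ^ (1 / p) := by
  have hp_pos : 0 < p := zero_lt_one.trans_le hp
  calc (∑ x, F x ^ p) ^ (1 / p)
      ≤ (∑ x, (a * u x + b * v x) ^ p) ^ (1 / p) :=
        Real.rpow_le_rpow (sum_nonneg fun x _ => Real.rpow_nonneg (hF x) p)
          (sum_le_sum fun x _ => Real.rpow_le_rpow (hF x) (hle x) hp_pos.le) (by positivity)
    _ ≤ (∑ x, (a * u x) ^ p) ^ (1 / p) + (∑ x, (b * v x) ^ p) ^ (1 / p) :=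
        Real.Lp_add_le_of_nonneg univ hp (fun x _ => mul_nonneg ha (hu x))
          fun x _ => mul_nonneg hb (hv x)
    _ = _ := by rw [rpow_sum_mul_rpow hp_pos.ne' ha hu, rpow_sum_mul_rpow hp_pos.ne' hb hv]

end ConvolutionNorms

section MaximalErgodic

variable {ι : Type*}

/-- The maximal function of the ergodic averages `(φ + T φ + ⋯ + T ^ (k - 1) φ) / k`, `1 ≤ k ≤ n`.
The range of the maximum includes the empty average, which is `0`. -/
def ergodicMax (T : Module.End ℝ (ι → ℝ)) (n : ℕ) (φ : ι → ℝ) (x : ι) : ℝ :=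
  (range (n + 1)).sup' nonempty_range_add_one fun k => birkhoffAverage ℝ T id k φ x

variable {T : Module.End ℝ (ι → ℝ)}

theorem birkhoffAverage_le_ergodicMax {k n : ℕ} (hk : k ≤ n) (φ : ι → ℝ) (x : ι) :
    birkhoffAverage ℝ T id k φ x ≤ ergodicMax T n φ x :=
  le_sup' (fun k => birkhoffAverage ℝ T id k φ x) (mem_range_succ_iff.2 hk)

theorem ergodicMax_nonneg (n : ℕ) (φ : ι → ℝ) : 0 ≤ ergodicMax T n φ := fun x => by
  simpa using birkhoffAverage_le_ergodicMax (T := T) (Nat.zero_le n) φ x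

theorem birkhoffSum_succ_eq_add_map (φ : ι → ℝ) (k : ℕ) :
    birkhoffSum T id (k + 1) φ = φ + T (birkhoffSum T id k φ) := by
  simp only [birkhoffSum, map_sum, id_eq, ← Function.iterate_succ_apply' T]
  exact (sum_range_succ' _ k).trans (add_comm _ _)

theorem lt_birkhoffAverage_iff {t : ℝ} (ht : 0 ≤ t) (k : ℕ) (φ : ι → ℝ) (x : ι) :
    t < birkhoffAverage ℝ T id k φ x ↔ 0 < birkhoffSum T id k φ x - k * t := by
  rcases k.eq_zero_or_pos with rfl | hk
  · simp [ht]
  · rw [birkhoffAverage, Pi.smul_apply, smul_eq_mul, inv_mul_eq_div, lt_div_iff₀' (by positivity),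
      sub_pos]

variable [Fintype ι]

/-- A positive operator on functions on a finite set that is a contraction of both `ℓ^∞` and `ℓ¹`,
i.e. has a nonnegative matrix with row and column sums at most `1`. -/
structure IsDoublySubstochastic (T : Module.End ℝ (ι → ℝ)) : Prop where
  monotone : Monotone T
  map_one_le : T 1 ≤ 1
  sum_map_le : ∀ φ, 0 ≤ φ → ∑ x, T φ x ≤ ∑ x, φ x

namespace IsDoublySubstochastic

theorem sum_nonneg_of_le_add_map (hT : IsDoublySubstochastic T) {M ψ : ι → ℝ} (hM : 0 ≤ M)
    (hle : ∀ x, 0 < M x → M x ≤ ψ x + T M x) : 0 ≤ ∑ x with 0 < M x, ψ x := by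
  have hTM : 0 ≤ T M := map_zero T ▸ hT.monotone hM
  have h : ∑ x, M x ≤ ∑ x with 0 < M x, ψ x + ∑ x, M x :=
    calc ∑ x, M x = ∑ x with 0 < M x, M x :=
          (sum_filter_of_ne fun x _ hx => (hM x).lt_of_ne' hx).symm
      _ ≤ ∑ x with 0 < M x, (ψ x + T M x) := sum_le_sum fun x hx => hle x (mem_filter.1 hx).2
      _ = ∑ x with 0 < M x, ψ x + ∑ x with 0 < M x, T M x := sum_add_distrib
      _ ≤ ∑ x with 0 < M x, ψ x + ∑ x, T M x := add_le_add_right (sum_le_univ_sum_of_nonneg hTM) _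
      _ ≤ ∑ x with 0 < M x, ψ x + ∑ x, M x := add_le_add_right (hT.sum_map_le M hM) _
  exact nonneg_of_le_add_left h

/- Garsia's proof of Hopf's maximal ergodic inequality: the maximum `M` of the partial sums of
`φ - t`, the empty one included, satisfies `M ≤ φ - t + T M` wherever it is positive. -/
theorem sum_sub_nonneg (hT : IsDoublySubstochastic T) {t : ℝ} (ht : 0 ≤ t) (n : ℕ) (φ : ι → ℝ) :
    0 ≤ ∑ x with t < ergodicMax T n φ x, (φ x - t) := by
  let S (k : ℕ) : ι → ℝ := birkhoffSum T id k φ - (k * t) • 1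
  let M (x : ι) : ℝ := (range (n + 1)).sup' nonempty_range_add_one fun k => S k x
  have hSM {k : ℕ} (hk : k ≤ n) : S k ≤ M := fun x =>
    le_sup' (fun k => S k x) (mem_range_succ_iff.2 hk)
  have hS_zero : S 0 = 0 := by simp [S]
  have hlevel (x : ι) : t < ergodicMax T n φ x ↔ 0 < M x := by
    simp [ergodicMax, M, S, lt_sup'_iff, lt_birkhoffAverage_iff ht]
  have hS_succ {k : ℕ} (hk : k ≤ n) (x : ι) : S (k + 1) x ≤ φ x - t + T M x := by
    have hTS : T (birkhoffSum T id k φ) ≤ T M + (k * t) • T 1 := by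
      simpa [S, sub_le_iff_le_add] using hT.monotone (hSM hk)
    have hT_one : (k * t) • T 1 ≤ (k * t) • 1 :=
      smul_le_smul_of_nonneg_left hT.map_one_le (by positivity)
    have := (hTS.trans (add_le_add_right hT_one _)) x
    simp only [S, birkhoffSum_succ_eq_add_map, Pi.add_apply, Pi.sub_apply, Pi.smul_apply,
      Pi.one_apply, smul_eq_mul, Nat.cast_succ] at this ⊢
    linarith
  simp only [hlevel]
  refine hT.sum_nonneg_of_le_add_map (hS_zero ▸ hSM (Nat.zero_le n)) fun x hx => ?_
  obtain ⟨k, hk, hkx⟩ := exists_mem_eq_sup' nonempty_range_add_one fun k => S k x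
  obtain _ | k := k
  · exact absurd (hkx.trans (congrFun hS_zero x)) hx.ne'
  · exact hkx.trans_le (hS_succ (Nat.le_of_lt (mem_range_succ_iff.1 hk)) x)

theorem rpow_sum_ergodicMax_rpow_le (hT : IsDoublySubstochastic T) {p : ℝ} (hp : 1 < p) (n : ℕ)
    {φ : ι → ℝ} (hφ : 0 ≤ φ) :
    (∑ x, ergodicMax T n φ x ^ p) ^ (1 / p) ≤ p / (p - 1) * (∑ x, φ x ^ p) ^ (1 / p) :=
  rpow_sum_rpow_le_of_sum_sub_nonneg hp hφ (ergodicMax_nonneg n φ)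
    fun _ ht => hT.sum_sub_nonneg ht.le n φ

end IsDoublySubstochastic

end MaximalErgodic

section HammingWalk

variable {ι A : Type*} [Fintype ι] [DecidableEq ι] [AddCommGroup A] [DecidableEq A]

theorem hammingNorm_add_single (x : ι → A) (i : ι) (a : A) :
    hammingNorm (x + Pi.single i a) + (if x i = 0 then 0 else 1) =
      hammingNorm x + (if x i + a = 0 then 0 else 1) := by
  have hsum (y : ι → A) : hammingNorm y =
      ∑ j ∈ univ.erase i, (if y j = 0 then 0 else 1) + (if y i = 0 then 0 else 1) := by
    rw [sum_erase_add _ _ (mem_univ i), hammingNorm, card_filter]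
    simp only [ne_eq, ite_not]
  have hoff : ∑ j ∈ univ.erase i, (if (x + Pi.single i a : ι → A) j = 0 then 0 else 1) =
      ∑ j ∈ univ.erase i, (if x j = 0 then 0 else 1) :=
    sum_congr rfl fun j hj => by simp [Pi.single_eq_of_ne (ne_of_mem_erase hj)]
  rw [hsum, hsum x, hoff, Pi.add_apply, Pi.single_eq_same]
  ring

theorem hammingNorm_add_single_le (x : ι → A) (i : ι) (a : A) :
    hammingNorm (x + Pi.single i a) ≤ hammingNorm x + 1 := by
  have := hammingNorm_add_single x i a
  split_ifs at this <;> omega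

variable [Fintype A]

theorem card_univ_erase_zero : #(univ.erase (0 : A)) = Fintype.card A - 1 := by
  rw [card_erase_of_mem (mem_univ _), card_univ]

theorem sum_hammingNorm_add_single (F : ℕ → ℝ) (x : ι → A) (i : ι) :
    ∑ a ∈ univ.erase (0 : A), F (hammingNorm (x + Pi.single i a)) =
      if x i = 0 then (Fintype.card A - 1) * F (hammingNorm x + 1)
      else F (hammingNorm x - 1) + (Fintype.card A - 2) * F (hammingNorm x) := by
  have hcard : (#(univ.erase (0 : A)) : ℝ) = Fintype.card A - 1 := by
    rw [card_univ_erase_zero, Nat.cast_sub Fintype.card_pos, Nat.cast_one]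
  split_ifs with hx
  · rw [← hcard, ← nsmul_eq_mul]
    refine sum_eq_card_nsmul fun a ha => ?_
    have := hammingNorm_add_single x i a
    simp_all
  · have hmem : -x i ∈ univ.erase (0 : A) := by simpa using hx
    have hcancel : hammingNorm (x + Pi.single i (-x i)) = hammingNorm x - 1 := by
      have := hammingNorm_add_single x i (-x i)
      simp only [hx, if_false, add_neg_cancel, if_true] at this
      omega
    have hkeep : ∀ a ∈ (univ.erase (0 : A)).erase (-x i),
        F (hammingNorm (x + Pi.single i a)) = F (hammingNorm x) := fun a ha => by
      have := hammingNorm_add_single x i a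
      have hne : x i + a ≠ 0 := fun h => ne_of_mem_erase ha (neg_eq_of_add_eq_zero_right h).symm
      simp only [hx, hne, if_false, add_left_inj] at this
      rw [this]
    rw [← add_sum_erase _ _ hmem, hcancel, sum_eq_card_nsmul hkeep, nsmul_eq_mul,
      cast_card_erase_of_mem hmem, hcard]
    ring

theorem sum_sum_hammingNorm_add_single (F : ℕ → ℝ) (x : ι → A) :
    ∑ i, ∑ a ∈ univ.erase (0 : A), F (hammingNorm (x + Pi.single i a)) =
      (Fintype.card ι - hammingNorm x) * ((Fintype.card A - 1) * F (hammingNorm x + 1)) +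
        hammingNorm x * (F (hammingNorm x - 1) + (Fintype.card A - 2) * F (hammingNorm x)) := by
  have hcard : (#{i | x i = 0} : ℝ) = Fintype.card ι - hammingNorm x := by
    rw [eq_sub_iff_add_eq]
    exact_mod_cast card_filter_add_card_filter_not (s := univ) fun i => x i = 0
  simp only [sum_hammingNorm_add_single, sum_ite, sum_const, nsmul_eq_mul, hcard]
  rfl

/-- The degree of the Hamming graph on `ι → A`, whose edges join the words differing in exactly one
letter. -/
def hammingDegree (ι A : Type*) [Fintype ι] [Fintype A] : ℕ :=
  Fintype.card ι * (Fintype.card A - 1)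

/-- The transition operator of the simple random walk on the Hamming graph: `hammingStep φ x` is the
mean of `φ` over the neighbours of `x`, which are the words `x + Pi.single i a` with `a ≠ 0`. It is
`0` if the graph has no edges. -/
def hammingStep : Module.End ℝ ((ι → A) → ℝ) :=
  (hammingDegree ι A : ℝ)⁻¹ •
    ∑ i, ∑ a ∈ univ.erase 0, LinearMap.funLeft ℝ ℝ fun x : ι → A => x + Pi.single i a

theorem hammingStep_apply (φ : (ι → A) → ℝ) (x : ι → A) :
    hammingStep φ x =
      (hammingDegree ι A : ℝ)⁻¹ * ∑ i, ∑ a ∈ univ.erase 0, φ (x + Pi.single i a) := by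
  simp [hammingStep, LinearMap.sum_apply, LinearMap.funLeft_apply]

theorem hammingStep_le_of_forall_neighbor_le {φ ψ : (ι → A) → ℝ} {x y : ι → A}
    (h : ∀ i a, φ (x + Pi.single i a) ≤ ψ (y + Pi.single i a)) :
    hammingStep φ x ≤ hammingStep ψ y := by
  simp only [hammingStep_apply]
  gcongr
  exact h _ _

theorem hammingStep_one (hdeg : hammingDegree ι A ≠ 0) : hammingStep (1 : (ι → A) → ℝ) = 1 := by
  ext x
  simp only [hammingStep_apply, Pi.one_apply, sum_const, card_univ_erase_zero, card_univ,
    nsmul_eq_mul, mul_one, ← Nat.cast_mul]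
  exact inv_mul_cancel₀ (Nat.cast_ne_zero.2 hdeg)

theorem hammingStep_one_le : hammingStep (1 : (ι → A) → ℝ) ≤ 1 := by
  by_cases hdeg : hammingDegree ι A = 0
  · intro x
    simp [hammingStep_apply, hdeg]
  · exact (hammingStep_one hdeg).le

theorem sum_erase_zero_comp_neg (u : A → ℝ) :
    ∑ a ∈ univ.erase 0, u (-a) = ∑ a ∈ univ.erase 0, u a :=
  sum_nbij' Neg.neg Neg.neg (by simp) (by simp) (by simp) (by simp) (by simp)

theorem hammingStep_comp_sub_left (φ : (ι → A) → ℝ) (c : ι → A) :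
    hammingStep (fun y => φ (c - y)) = fun y => hammingStep φ (c - y) := by
  ext y
  simp only [hammingStep_apply]
  congr! 2 with i
  rw [← sum_erase_zero_comp_neg]
  simp only [Pi.single_neg, ← sub_eq_add_neg, sub_sub_eq_add_sub, sub_add_eq_add_sub]

theorem hammingStep_dotProduct (φ ψ : (ι → A) → ℝ) :
    hammingStep φ ⬝ᵥ ψ = φ ⬝ᵥ hammingStep ψ := by
  have hshift (s : ι → A) : (fun x => φ (x + s)) ⬝ᵥ ψ = φ ⬝ᵥ fun x => ψ (x + -s) := by
    rw [dotProduct, dotProduct, ← Equiv.sum_comp (Equiv.addRight s) fun x => φ x * ψ (x + -s)]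
    simp
  simp only [hammingStep, LinearMap.smul_apply, LinearMap.sum_apply, smul_dotProduct,
    sum_dotProduct, dotProduct_smul, dotProduct_sum]
  congr! 2 with i
  rw [← sum_erase_zero_comp_neg]
  refine sum_congr rfl fun a _ => ?_
  exact (hshift _).trans (by simp only [Pi.single_neg, neg_neg]; rfl)

theorem isDoublySubstochastic_hammingStep :
    IsDoublySubstochastic (hammingStep : Module.End ℝ ((ι → A) → ℝ)) where
  monotone _ _ h _ := hammingStep_le_of_forall_neighbor_le fun _ _ => h _
  map_one_le := hammingStep_one_le
  sum_map_le φ hφ := by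
    simp only [← dotProduct_one, hammingStep_dotProduct]
    exact dotProduct_le_dotProduct_of_nonneg_left hammingStep_one_le hφ

theorem hammingStep_pow_le_of_forall_le {n : ℕ} {φ ψ : (ι → A) → ℝ} {x : ι → A}
    (h : ∀ y, hammingNorm y ≤ hammingNorm x + n → φ y ≤ ψ y) :
    (hammingStep ^ n) φ x ≤ (hammingStep ^ n) ψ x := by
  induction n generalizing x with
  | zero => exact h x le_rfl
  | succ n ih =>
    rw [pow_succ', Module.End.mul_apply, Module.End.mul_apply]
    refine hammingStep_le_of_forall_neighbor_le fun i a => ih fun y hy => h y ?_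
    have := hammingNorm_add_single_le x i a
    omega

theorem hammingStep_pow_one (hdeg : hammingDegree ι A ≠ 0) (n : ℕ) :
    (hammingStep ^ n) (1 : (ι → A) → ℝ) = 1 := by
  rw [Module.End.pow_apply]
  exact Function.iterate_fixed (hammingStep_one hdeg) n

theorem hammingStep_hammingNorm (hdeg : hammingDegree ι A ≠ 0) :
    hammingStep (fun x : ι → A => (hammingNorm x : ℝ)) =
      1 + (1 - Fintype.card A / hammingDegree ι A : ℝ) • fun x => (hammingNorm x : ℝ) := by
  have hdeg_cast : (hammingDegree ι A : ℝ) = Fintype.card ι * (Fintype.card A - 1) := by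
    rw [hammingDegree, Nat.cast_mul, Nat.cast_sub Fintype.card_pos, Nat.cast_one]
  have hdeg_ne : (hammingDegree ι A : ℝ) ≠ 0 := Nat.cast_ne_zero.2 hdeg
  ext x
  have hpred : (hammingNorm x : ℝ) * (hammingNorm x - 1 : ℕ) =
      hammingNorm x * (hammingNorm x - 1) := by
    cases hammingNorm x <;> simp
  have hsum : ∑ i, ∑ a ∈ univ.erase 0, (hammingNorm (x + Pi.single i a : ι → A) : ℝ) =
      hammingDegree ι A * (hammingNorm x + 1) - Fintype.card A * hammingNorm x := by
    rw [sum_sum_hammingNorm_add_single (fun r => (r : ℝ)), mul_add (hammingNorm x : ℝ), hpred,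
      hdeg_cast, Nat.cast_succ]
    ring
  simp only [hammingStep_apply, hsum, Pi.add_apply, Pi.one_apply, Pi.smul_apply, smul_eq_mul]
  field_simp
  ring

theorem hammingStep_pow_hammingNorm_zero_le (hdeg : hammingDegree ι A ≠ 0) (n : ℕ) :
    (hammingStep ^ n) (fun x : ι → A => (hammingNorm x : ℝ)) 0 ≤ n :=
  calc (hammingStep ^ n) (fun x : ι → A => (hammingNorm x : ℝ)) 0
      ≤ (hammingStep ^ n) ((n : ℝ) • 1 : (ι → A) → ℝ) 0 :=
        hammingStep_pow_le_of_forall_le fun y hy => by simpa using hy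
    _ = n := by simp [hammingStep_pow_one hdeg]

theorem le_hammingStep_pow_hammingNorm_zero (hdeg : hammingDegree ι A ≠ 0) (n : ℕ) :
    n - Fintype.card A / hammingDegree ι A * n ^ 2 / 2 ≤
      (hammingStep ^ n) (fun x : ι → A => (hammingNorm x : ℝ)) 0 := by
  induction n with
  | zero => simp
  | succ n ih =>
    have hmean := hammingStep_pow_hammingNorm_zero_le hdeg n
    rw [pow_succ hammingStep, Module.End.mul_apply, hammingStep_hammingNorm hdeg, map_add, map_smul,
      hammingStep_pow_one hdeg, Pi.add_apply, Pi.one_apply, Pi.smul_apply, smul_eq_mul]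
    have hdrift : (0 : ℝ) ≤ Fintype.card A / hammingDegree ι A := by positivity
    push_cast
    nlinarith [mul_le_mul_of_nonneg_left hmean hdrift]

theorem hammingStep_indicator_lt_le (k : ℕ) :
    hammingStep ({y : ι → A | k < hammingNorm y}.indicator 1) ≤
      {y | k < hammingNorm y}.indicator 1 + {y | hammingNorm y = k}.indicator 1 := by
  intro x
  rcases lt_or_ge (hammingNorm x) k with hx | hx
  · have hstep := hammingStep_le_of_forall_neighbor_le (x := x) (y := x) (ψ := 0)
      (φ := {y : ι → A | k < hammingNorm y}.indicator 1) fun i a =>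
        (Set.indicator_of_notMem (by simpa using (hammingNorm_add_single_le x i a).trans hx) _).le
    rw [map_zero] at hstep
    exact hstep.trans (add_nonneg (Set.indicator_nonneg (by simp) x)
      (Set.indicator_nonneg (by simp) x))
  · have hone := (isDoublySubstochastic_hammingStep.monotone
      (Set.indicator_le_self' (s := {y : ι → A | k < hammingNorm y}) (f := 1) (by simp))).trans
        hammingStep_one_le x
    refine hone.trans_eq ?_
    rcases hx.eq_or_lt with hx | hx
    · simp [hx]
    · simp [hx, hx.ne']

/- Just before it first exceeds weight `k` the walk sits on the sphere of radius `k`. -/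
theorem hammingStep_pow_indicator_lt_le_sum (k n : ℕ) :
    (hammingStep ^ n) ({y : ι → A | k < hammingNorm y}.indicator 1) 0 ≤
      ∑ j ∈ range n, (hammingStep ^ j) ({y : ι → A | hammingNorm y = k}.indicator 1) 0 := by
  induction n with
  | zero => simp
  | succ n ih =>
    rw [sum_range_succ, pow_succ, Module.End.mul_apply]
    calc (hammingStep ^ n) (hammingStep ({y : ι → A | k < hammingNorm y}.indicator 1)) 0
        ≤ (hammingStep ^ n) ({y : ι → A | k < hammingNorm y}.indicator 1 +
            {y : ι → A | hammingNorm y = k}.indicator 1) 0 :=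
          hammingStep_pow_le_of_forall_le fun y _ => hammingStep_indicator_lt_le k y
      _ ≤ _ := by
          rw [map_add, Pi.add_apply]
          gcongr

theorem one_fourth_le_hammingStep_pow_indicator_lt {L : ℕ}
    (hL : 4 * (L + 1) * Fintype.card A ≤ hammingDegree ι A) :
    1 / 4 ≤ (hammingStep ^ (4 * (L + 1))) ({y : ι → A | L < hammingNorm y}.indicator 1) 0 := by
  have hdeg_pos : 0 < hammingDegree ι A :=
    (Nat.mul_pos (by positivity) Fintype.card_pos).trans_le hL
  set n := 4 * (L + 1) with hn
  set tail := (hammingStep ^ n) ({y : ι → A | L < hammingNorm y}.indicator 1) 0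
  have hmean_le : (hammingStep ^ n) (fun x : ι → A => (hammingNorm x : ℝ)) 0 ≤ L + n * tail :=
    calc (hammingStep ^ n) (fun x : ι → A => (hammingNorm x : ℝ)) 0
        ≤ (hammingStep ^ n) ((L : ℝ) • 1 +
            (n : ℝ) • {y : ι → A | L < hammingNorm y}.indicator 1) 0 := by
          refine hammingStep_pow_le_of_forall_le fun y hy => ?_
          rcases le_or_gt (hammingNorm y) L with hyL | hyL
          · simpa [hyL.not_gt] using hyL
          · have : (hammingNorm y : ℝ) ≤ n := by simpa using hy
            simp only [Pi.add_apply, Pi.smul_apply, Set.mem_ofPred_eq, hyL,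
              Set.indicator_of_mem, Pi.one_apply, smul_eq_mul, mul_one]
            linarith [L.cast_nonneg (α := ℝ)]
      _ = L + n * tail := by simp [hammingStep_pow_one hdeg_pos.ne', tail]
  have hdrift : Fintype.card A / hammingDegree ι A * (n : ℝ) ≤ 1 := by
    rw [div_mul_eq_mul_div, div_le_one (by positivity), mul_comm]
    exact_mod_cast hL
  have hmean_ge := le_hammingStep_pow_hammingNorm_zero (ι := ι) (A := A) hdeg_pos.ne' n
  have hn_cast : (n : ℝ) = 4 * (L + 1) := by simp [hn]
  have hn_pos : (0 : ℝ) < n := by positivity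
  refine le_of_mul_le_mul_left ?_ hn_pos
  nlinarith [mul_le_mul_of_nonneg_right hdrift hn_pos.le]

/-- The distribution after `n` steps of the simple random walk on the Hamming graph started at `0`.
If the graph has no edges, it is `0` for `n ≠ 0`. -/
def walkLaw (n : ℕ) : (ι → A) → ℝ := (hammingStep ^ n) (Pi.single 0 1)

theorem walkLaw_nonneg (n : ℕ) (y : ι → A) : 0 ≤ walkLaw n y := by
  have := hammingStep_pow_le_of_forall_le (n := n) (x := y) (φ := 0) (ψ := Pi.single 0 1)
    fun z _ => (Pi.single_nonneg.2 zero_le_one : (0 : (ι → A) → ℝ) ≤ Pi.single 0 1) z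
  rwa [map_zero] at this

theorem hammingStep_pow_dotProduct (n : ℕ) (φ ψ : (ι → A) → ℝ) :
    (hammingStep ^ n) φ ⬝ᵥ ψ = φ ⬝ᵥ (hammingStep ^ n) ψ := by
  induction n generalizing ψ with
  | zero => rfl
  | succ n ih =>
    rw [pow_succ', Module.End.mul_apply, hammingStep_dotProduct, ih, ← Module.End.mul_apply,
      ← pow_succ, pow_succ']

theorem hammingStep_pow_apply_zero (n : ℕ) (φ : (ι → A) → ℝ) :
    (hammingStep ^ n) φ 0 = walkLaw n ⬝ᵥ φ := by
  rw [walkLaw, hammingStep_pow_dotProduct, single_dotProduct, one_mul]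

theorem hammingStep_pow_comp_sub_left (n : ℕ) (φ : (ι → A) → ℝ) (c : ι → A) :
    (hammingStep ^ n) (fun y => φ (c - y)) = fun y => (hammingStep ^ n) φ (c - y) := by
  induction n with
  | zero => rfl
  | succ n ih =>
    rw [pow_succ', Module.End.mul_apply, ih, hammingStep_comp_sub_left, Module.End.mul_apply]

theorem hammingStep_pow_apply (n : ℕ) (φ : (ι → A) → ℝ) (x : ι → A) :
    (hammingStep ^ n) φ x = ∑ y, walkLaw n y * φ (x - y) := by
  have h := hammingStep_pow_apply_zero n fun y => φ (x - y)
  simpa only [hammingStep_pow_comp_sub_left, sub_zero, dotProduct] using h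

theorem hammingStep_factorsThrough {φ : (ι → A) → ℝ} (hφ : φ.FactorsThrough hammingNorm) :
    (hammingStep φ).FactorsThrough hammingNorm := by
  obtain ⟨F, rfl⟩ := (Function.factorsThrough_iff φ).1 hφ
  intro x y hxy
  simp only [hammingStep_apply, Function.comp_apply, sum_sum_hammingNorm_add_single, hxy]

theorem walkLaw_factorsThrough (n : ℕ) :
    (walkLaw n : (ι → A) → ℝ).FactorsThrough hammingNorm := by
  induction n with
  | zero =>
    intro x y hxy
    have : x = 0 ↔ y = 0 := by rw [← hammingNorm_eq_zero, hxy, hammingNorm_eq_zero]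
    simp [walkLaw, Pi.single_apply, this]
  | succ n ih =>
    rw [walkLaw, pow_succ', Module.End.mul_apply]
    exact hammingStep_factorsThrough ih

theorem hammingStep_pow_indicator_sphere (n : ℕ) (y : ι → A) :
    (hammingStep ^ n) ({z : ι → A | hammingNorm z = hammingNorm y}.indicator 1) 0 =
      #{z : ι → A | hammingNorm z = hammingNorm y} * walkLaw n y := by
  simp only [hammingStep_pow_apply_zero, dotProduct, Set.indicator_apply, Set.mem_ofPred_eq,
    Pi.one_apply, mul_ite, mul_one, mul_zero]
  rw [← sum_filter, ← nsmul_eq_mul]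
  exact sum_eq_card_nsmul fun z hz => walkLaw_factorsThrough n (mem_filter.1 hz).2

/-- The uniform probability measure on the sphere of radius `k` about `0` in the Hamming metric, as
a density on `ι → A`. It is `0` if the sphere is empty. -/
def sphereMeasure (k : ℕ) (y : ι → A) : ℝ :=
  if hammingNorm y = k then (#{z : ι → A | hammingNorm z = k} : ℝ)⁻¹ else 0

theorem sphereMeasure_nonneg (k : ℕ) (y : ι → A) : 0 ≤ sphereMeasure k y := by
  rw [sphereMeasure]
  positivity

theorem sum_sphereMeasure_le_one (k : ℕ) : ∑ y : ι → A, sphereMeasure k y ≤ 1 := by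
  simp only [sphereMeasure, ← sum_filter, sum_const, nsmul_eq_mul]
  exact mul_inv_le_one

theorem one_fourth_le_card_sphere_mul_sum_walkLaw {L : ℕ}
    (hL : 4 * (L + 1) * Fintype.card A ≤ hammingDegree ι A) {y : ι → A} (hy : hammingNorm y ≤ L) :
    1 / 4 ≤ #{z : ι → A | hammingNorm z = hammingNorm y} *
      ∑ j ∈ range (4 * (L + 1)), walkLaw j y :=
  calc (1 / 4 : ℝ)
      ≤ (hammingStep ^ (4 * (L + 1))) ({z : ι → A | L < hammingNorm z}.indicator 1) 0 :=
        one_fourth_le_hammingStep_pow_indicator_lt hL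
    _ ≤ (hammingStep ^ (4 * (L + 1)))
          ({z : ι → A | hammingNorm y < hammingNorm z}.indicator 1) 0 :=
        hammingStep_pow_le_of_forall_le fun z _ => Set.indicator_le_indicator_of_subset
          (fun _ => hy.trans_lt) (fun _ => zero_le_one) z
    _ ≤ ∑ j ∈ range (4 * (L + 1)),
          (hammingStep ^ j) ({z : ι → A | hammingNorm z = hammingNorm y}.indicator 1) 0 :=
        hammingStep_pow_indicator_lt_le_sum _ _
    _ = _ := by simp only [hammingStep_pow_indicator_sphere, mul_sum]

theorem sum_sphereMeasure_le {L : ℕ} (hL : 4 * (L + 1) * Fintype.card A ≤ hammingDegree ι A)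
    (y : ι → A) :
    ∑ k ∈ range (L + 1), sphereMeasure k y ≤ 4 * ∑ j ∈ range (4 * (L + 1)), walkLaw j y := by
  simp only [sphereMeasure, sum_ite_eq, mem_range_succ_iff]
  split_ifs with hy
  · have hcard : 0 < #{z : ι → A | hammingNorm z = hammingNorm y} :=
      card_pos.2 ⟨y, by simp⟩
    rw [inv_le_iff_one_le_mul₀' (by exact_mod_cast hcard)]
    linarith [one_fourth_le_card_sphere_mul_sum_walkLaw hL hy]
  · exact mul_nonneg zero_le_four (sum_nonneg fun j _ => walkLaw_nonneg j y)

/-- The average `(σ₀ + ⋯ + σ_L) / (L + 1)` of the uniform measures on the spheres of radius at most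
`L`: the convolution kernel of the `L`-th mean in the smooth local spherical maximal function. -/
def sphericalMean (L : ℕ) (y : ι → A) : ℝ :=
  (L + 1 : ℝ)⁻¹ * ∑ k ∈ range (L + 1), sphereMeasure k y

theorem sphericalMean_nonneg (L : ℕ) (y : ι → A) : 0 ≤ sphericalMean L y :=
  mul_nonneg (by positivity) (sum_nonneg fun k _ => sphereMeasure_nonneg k y)

theorem sum_sphericalMean_le_one (L : ℕ) : ∑ y : ι → A, sphericalMean L y ≤ 1 := by
  simp only [sphericalMean, ← mul_sum]
  rw [sum_comm, inv_mul_le_iff₀ (by positivity)]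
  exact (sum_le_card_nsmul _ _ _ fun k _ => sum_sphereMeasure_le_one k).trans_eq (by simp)

theorem sphericalMean_le_mul {L Q : ℕ} {c : ℝ} (hLQ : L ≤ Q) (hQ : (Q + 1 : ℝ) ≤ c * (L + 1))
    (y : ι → A) : sphericalMean L y ≤ c * sphericalMean Q y := by
  have hsum : ∑ k ∈ range (L + 1), sphereMeasure k y ≤ ∑ k ∈ range (Q + 1), sphereMeasure k y :=
    sum_le_sum_of_subset_of_nonneg (range_subset_range.2 (by omega))
      fun k _ _ => sphereMeasure_nonneg k y
  have hinv : (L + 1 : ℝ)⁻¹ ≤ c * (Q + 1 : ℝ)⁻¹ := by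
    rwa [← div_eq_mul_inv, inv_le_iff_one_le_mul₀ (by positivity), div_mul_eq_mul_div,
      one_le_div (by positivity)]
  rw [sphericalMean, sphericalMean, ← mul_assoc]
  exact mul_le_mul hinv hsum (sum_nonneg fun k _ => sphereMeasure_nonneg k y)
    ((by positivity : (0 : ℝ) ≤ (L + 1 : ℝ)⁻¹).trans hinv)

theorem birkhoffAverage_hammingStep (n : ℕ) (g : (ι → A) → ℝ) (x : ι → A) :
    birkhoffAverage ℝ hammingStep id n g x =
      (n : ℝ)⁻¹ * ∑ y, (∑ j ∈ range n, walkLaw j y) * g (x - y) := by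
  simp only [birkhoffAverage, birkhoffSum, id_eq, Pi.smul_apply, Finset.sum_apply,
    smul_eq_mul, ← Module.End.pow_apply, hammingStep_pow_apply, sum_mul]
  rw [sum_comm]

theorem sum_sphericalMean_mul_le_ergodicMax {L n : ℕ}
    (hL : 4 * (L + 1) * Fintype.card A ≤ hammingDegree ι A) (hn : 4 * (L + 1) ≤ n)
    {g : (ι → A) → ℝ} (hg : 0 ≤ g) (x : ι → A) :
    ∑ y, sphericalMean L y * g (x - y) ≤ 16 * ergodicMax hammingStep n g x :=
  calc ∑ y, sphericalMean L y * g (x - y)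
      ≤ ∑ y, (L + 1 : ℝ)⁻¹ * (4 * ∑ j ∈ range (4 * (L + 1)), walkLaw j y) * g (x - y) := by
        unfold sphericalMean
        gcongr with y
        · exact hg _
        · exact sum_sphereMeasure_le hL y
    _ = 16 * birkhoffAverage ℝ hammingStep id (4 * (L + 1)) g x := by
        simp only [birkhoffAverage_hammingStep, mul_assoc, ← mul_sum]
        push_cast
        field_simp
        ring
    _ ≤ _ := mul_le_mul_of_nonneg_left (birkhoffAverage_le_ergodicMax hn g x) (by norm_num)

end HammingWalk

section SmoothLocalMax

variable {m N : ℕ} (f : (Fin N → ZMod (m + 1)) → ℂ) (x : Fin N → ZMod (m + 1))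

theorem norm_sigmaC (k : ℕ) : ‖sigmaC m N k x‖ = sphereMeasure k x := by
  have hw_eq (y : Fin N → ZMod (m + 1)) : hw y = hammingNorm y := rfl
  simp only [sigmaC, sphereMeasure, hw_eq, Nat.cast_inj]
  split_ifs <;> simp

theorem norm_average_convC_le (L : ℕ) :
    1 / ((L : ℝ) + 1) * ‖∑ k ∈ range (L + 1), convC (sigmaC m N (k : ℤ)) f x‖ ≤
      ∑ y, sphericalMean L y * ‖f (x - y)‖ := by
  simp only [sphericalMean, one_div, mul_assoc, ← mul_sum, sum_mul]
  gcongr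
  rw [sum_comm]
  refine (norm_sum_le _ _).trans (sum_le_sum fun k _ => (norm_sum_le _ _).trans_eq ?_)
  simp only [norm_mul, norm_sigmaC]

theorem smoothLocalMax_nonneg : 0 ≤ smoothLocalMax m N f := fun x =>
  le_trans (by positivity) <| le_sup' (fun L : ℕ =>
    1 / ((L : ℝ) + 1) * ‖∑ k ∈ range (L + 1), convC (sigmaC m N (k : ℤ)) f x‖)
      (mem_range.2 (Nat.succ_pos _))

theorem hammingDegree_zmod : hammingDegree (Fin N) (ZMod (m + 1)) = m * N := by
  simp [hammingDegree, ZMod.card, mul_comm]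

theorem smoothLocalMax_le : smoothLocalMax m N f x ≤
    16 * ergodicMax hammingStep (m * N) (‖f ·‖) x +
      4 * ∑ y, sphericalMean (m * N / (m + 1)) y * ‖f (x - y)‖ := by
  set Q := m * N / (m + 1)
  have hergodic : 0 ≤ ergodicMax hammingStep (m * N) (‖f ·‖) x := ergodicMax_nonneg _ _ x
  have hmean : 0 ≤ ∑ y, sphericalMean Q y * ‖f (x - y)‖ :=
    sum_nonneg fun y _ => mul_nonneg (sphericalMean_nonneg Q y) (norm_nonneg _)
  refine sup'_le _ _ fun L hL => (norm_average_convC_le f x L).trans ?_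
  rcases le_or_gt (4 * (L + 1) * (m + 1)) (m * N) with hsmall | hlarge
  · have hdeg : 4 * (L + 1) * Fintype.card (ZMod (m + 1)) ≤
        hammingDegree (Fin N) (ZMod (m + 1)) := by rwa [hammingDegree_zmod, ZMod.card]
    have hn : 4 * (L + 1) ≤ m * N := (Nat.le_mul_of_pos_right _ m.succ_pos).trans hsmall
    linarith [sum_sphericalMean_mul_le_ergodicMax hdeg hn (fun y => norm_nonneg (f y)) x]
  · have hQ : Q + 1 ≤ 4 * (L + 1) := (Nat.div_lt_iff_lt_mul m.succ_pos).2 hlarge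
    have hcomparable : ∑ y, sphericalMean L y * ‖f (x - y)‖ ≤
        4 * ∑ y, sphericalMean Q y * ‖f (x - y)‖ := by
      rw [mul_sum]
      refine sum_le_sum fun y _ => ?_
      rw [← mul_assoc]
      gcongr
      exact sphericalMean_le_mul (mem_range_succ_iff.1 hL) (by exact_mod_cast hQ) y
    linarith

end SmoothLocalMax

theorem statement7_general (p : ℝ) (hp : 1 < p) :
    ∃ C : ℝ, ∀ (m N : ℕ) (f : (Fin N → ZMod (m + 1)) → ℂ),
      (∑ x, smoothLocalMax m N f x ^ p) ^ (1 / p) ≤ C * (∑ x, ‖f x‖ ^ p) ^ (1 / p) := by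
  refine ⟨16 * (p / (p - 1)) + 4, fun m N f => ?_⟩
  have hergodic := isDoublySubstochastic_hammingStep.rpow_sum_ergodicMax_rpow_le hp (m * N)
    fun x => norm_nonneg (f x)
  have hmean := rpow_sum_conv_rpow_le hp.le (sphericalMean_nonneg (m * N / (m + 1)))
    (sum_sphericalMean_le_one _) fun x => norm_nonneg (f x)
  have hsplit := rpow_sum_rpow_le_of_le_add hp.le (by norm_num) (by norm_num)
    (smoothLocalMax_nonneg f) (ergodicMax_nonneg (m * N) (‖f ·‖))
    (fun x => sum_nonneg fun y _ => mul_nonneg (sphericalMean_nonneg (m * N / (m + 1)) y)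
      (norm_nonneg (f (x - y)))) (smoothLocalMax_le f)
  linarith

theorem statement7 (m : ℕ) (hm : 2 ≤ m) (p : ℝ) (hp : 1 < p) :
    ∃ C : ℝ, ∀ N : ℕ, 1 ≤ N → ∀ f : (Fin N → ZMod (m + 1)) → ℂ,
      (∑ x, smoothLocalMax m N f x ^ p) ^ (1 / p) ≤ C * (∑ x, ‖f x‖ ^ p) ^ (1 / p) := by
  obtain ⟨C, hC⟩ := statement7_general p hp
  exact ⟨C, fun N _ f => hC m N f⟩
end
end

section
/- For all integers N ≥ 1, 0 ≤ r ≤ N, and 0 ≤ t ≤ k ≤ N, one has Σ_{j=0}^{t} (−1)^j · C(t,j) · κ_{k−j}^N(r) = (−1/c_m)^t · (C(N−t, r−t)/C(N,r)) · κ_{k−t}^{N−t}(r−t), with the conventions C(N−t, r−t) = 0 for r < t and κ with any negative argument equal to 0; in particular the left-hand side is 0 whenever r < t. -/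
noncomputable section

/-- The normalized Krawtchouk polynomial
`κ_k^N(r) = Σ_{j=max(0,r+k-N)}^{min(r,k)} (-1)^j C(N,k)⁻¹ C(r,j) C(N-r,k-j) m^{-j}`.
(Natural subtraction `r + k - N` is exactly `max (0, r + k - N)`.) -/
def kraw (m NN k r : ℕ) : ℝ :=
  ∑ j ∈ Finset.Icc (r + k - NN) (min r k),
    (-1 : ℝ) ^ j * ((NN.choose k : ℝ))⁻¹ * (r.choose j : ℝ) *
      (((NN - r).choose (k - j) : ℝ)) * ((m : ℝ)⁻¹) ^ j

/-- Krawtchouk polynomial with integer arguments: `0` if any argument is negative. -/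
def krawZ (m : ℕ) (NN k r : ℤ) : ℝ :=
  if 0 ≤ NN ∧ 0 ≤ k ∧ 0 ≤ r then kraw m NN.toNat k.toNat r.toNat else 0

/-- Binomial coefficient with integer arguments: `0` if either argument is negative. -/
def chooseZ (a b : ℤ) : ℕ :=
  if 0 ≤ a ∧ 0 ≤ b then a.toNat.choose b.toNat else 0

/-!
Krawtchouk polynomials are self-dual: `C(N, r) κ_k^N(r)` is the coefficient of `y ^ r` in
`(1 - y / m) ^ k * (1 + y) ^ (N - k)`. Lowering `k` by one replaces a factor `1 - y / m` by `1 + y`,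
so the `t`-fold alternating sum over `k - j` produces the factor
`((1 - y / m) - (1 + y)) ^ t = (-(1 + 1 / m) * y) ^ t`, and the power `y ^ t` shifts `r` to `r - t`.
-/

open Polynomial

section Choose

theorem choose_mul_choose_sub_comm (n a b : ℕ) :
    n.choose a * (n - a).choose b = n.choose b * (n - b).choose a := by
  have choose_add_mul (a b : ℕ) :
      n.choose (a + b) * (a + b).choose a = n.choose a * (n - a).choose b := by
    simpa using n.choose_mul (Nat.le_add_right a b)
  rw [← choose_add_mul a b, ← choose_add_mul b a, add_comm b a, Nat.choose_symm_add]

theorem choose_mul_choose_mul_choose_comm (N : ℕ) {r k j : ℕ} (hjr : j ≤ r) (hjk : j ≤ k) :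
    N.choose r * (r.choose j * (N - r).choose (k - j)) =
      N.choose k * (k.choose j * (N - k).choose (r - j)) := by
  have hr : N - r = N - j - (r - j) := by omega
  have hk : N - k = N - j - (k - j) := by omega
  rw [← mul_assoc, ← mul_assoc, N.choose_mul hjr, N.choose_mul hjk, mul_assoc, mul_assoc, hr, hk,
    choose_mul_choose_sub_comm]

end Choose

section GeneratingPolynomial

variable {R : Type*}

/-- The generating polynomial `(1 + x y) ^ k * (1 + y) ^ n` in the variable `y`. For `x = -1 / m`
and `n = N - k` its coefficients are the Krawtchouk values `κ_k^N(r)` scaled by `C(N, r)`. -/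
def krawGenPoly [CommSemiring R] (x : R) (k n : ℕ) : R[X] := (1 + C x * X) ^ k * (1 + X) ^ n

theorem coeff_krawGenPoly [CommSemiring R] (x : R) (k n r : ℕ) :
    (krawGenPoly x k n).coeff r =
      ∑ j ∈ Finset.range (r + 1), (k.choose j : R) * x ^ j * (n.choose (r - j) : R) := by
  have hcomp : (1 + C x * X) ^ k = ((1 + X) ^ k : R[X]).comp (C x * X) := by simp
  simp only [krawGenPoly, hcomp, coeff_mul, Finset.Nat.sum_antidiagonal_eq_sum_range_succ_mk,
    comp_C_mul_X_coeff, coeff_one_add_X_pow]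

theorem sum_neg_one_pow_mul_choose_mul_krawGenPoly [CommRing R] (x : R) {k t : ℕ} (n : ℕ)
    (ht : t ≤ k) :
    ∑ j ∈ Finset.range (t + 1),
        C ((-1 : R) ^ j * (t.choose j : R)) * krawGenPoly x (k - j) (n + j) =
      C ((x - 1) ^ t) * (X ^ t * krawGenPoly x (k - t) n) := by
  have binomial : (C ((x - 1) ^ t) * X ^ t : R[X]) = (-(1 + X) + (1 + C x * X)) ^ t := by
    rw [C_pow, ← mul_pow, C_sub, C_1]
    ring
  rw [← mul_assoc, binomial, add_pow, Finset.sum_mul]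
  refine Finset.sum_congr rfl fun j hj => ?_
  obtain ⟨i, rfl⟩ := Nat.exists_eq_add_of_le (Finset.mem_range_succ_iff.mp hj)
  obtain ⟨l, rfl⟩ := Nat.exists_eq_add_of_le ht
  have hk : j + i + l - j = i + l := by omega
  simp only [krawGenPoly, hk, Nat.add_sub_cancel_left, neg_pow (1 + X : R[X]), map_mul, map_pow,
    map_neg, map_one, map_natCast]
  ring

end GeneratingPolynomial

section Krawtchouk

variable (m : ℕ) {N k t : ℕ}

theorem choose_mul_kraw (r : ℕ) (hk : k ≤ N) :
    (N.choose r : ℝ) * kraw m N k r = (krawGenPoly (-(m : ℝ)⁻¹) k (N - k)).coeff r := by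
  rw [coeff_krawGenPoly, kraw, Finset.mul_sum]
  have hsub : Finset.Icc (r + k - N) (min r k) ⊆ Finset.range (r + 1) := by
    intro j hj
    simp only [Finset.mem_Icc, Finset.mem_range] at *
    omega
  refine Finset.sum_subset_zero_on_sdiff hsub (fun j hj => ?_) (fun j hj => ?_)
  · simp only [Finset.mem_sdiff, Finset.mem_Icc, Finset.mem_range] at hj
    obtain hkj | hNk : k < j ∨ N - k < r - j := by omega
    · simp [Nat.choose_eq_zero_of_lt hkj]
    · simp [Nat.choose_eq_zero_of_lt hNk]
  · obtain ⟨hjr, hjk⟩ := le_min_iff.mp (Finset.mem_Icc.mp hj).2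
    have hNk : (N.choose k : ℝ) ≠ 0 := mod_cast (Nat.choose_pos hk).ne'
    have hcomm : (N.choose r : ℝ) * (r.choose j * (N - r).choose (k - j)) =
        N.choose k * (k.choose j * (N - k).choose (r - j)) :=
      mod_cast choose_mul_choose_mul_choose_comm N hjr hjk
    rw [neg_pow (m : ℝ)⁻¹]
    field_simp
    linear_combination (m : ℝ)⁻¹ ^ j * hcomm

theorem chooseZ_mul_krawZ_sub (r : ℕ) (ht : t ≤ k) (hk : k ≤ N) :
    (chooseZ ((N : ℤ) - t) ((r : ℤ) - t) : ℝ) * krawZ m ((N : ℤ) - t) ((k : ℤ) - t) ((r : ℤ) - t) =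
      (X ^ t * krawGenPoly (-(m : ℝ)⁻¹) (k - t) (N - k)).coeff r := by
  rw [coeff_X_pow_mul', chooseZ, krawZ]
  rcases le_or_gt t r with htr | hrt
  · have hNk : N - k = N - t - (k - t) := by omega
    rw [if_pos (by omega), if_pos (by omega), if_pos htr, hNk,
      ← choose_mul_kraw m (r - t) (Nat.sub_le_sub_right hk t)]
    simp only [Int.toNat_sub]
  · rw [if_neg (by omega), if_neg (by omega), if_neg (by omega), mul_zero]

end Krawtchouk

theorem statement9_general (m : ℕ) (hm : m ≠ 0) (N r k t : ℕ)
    (hr : r ≤ N) (ht : t ≤ k) (hk : k ≤ N) :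
    ∑ j ∈ Finset.range (t + 1), (-1 : ℝ) ^ j * (t.choose j : ℝ) * kraw m N (k - j) r =
      (-(1 / ((m : ℝ) / (m + 1)))) ^ t *
        ((chooseZ ((N : ℤ) - t) ((r : ℤ) - t) : ℝ) / (N.choose r : ℝ)) *
        krawZ m ((N : ℤ) - t) ((k : ℤ) - t) ((r : ℤ) - t) := by
  have hc : -(1 / ((m : ℝ) / (m + 1))) = -(m : ℝ)⁻¹ - 1 := by
    field_simp
    ring
  have hNr : (N.choose r : ℝ) ≠ 0 := mod_cast (Nat.choose_pos hr).ne'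
  have hcoeff (j : ℕ) (hj : j ∈ Finset.range (t + 1)) :
      (N.choose r : ℝ) * kraw m N (k - j) r =
        (krawGenPoly (-(m : ℝ)⁻¹) (k - j) (N - k + j)).coeff r := by
    have hjt : j ≤ t := Finset.mem_range_succ_iff.mp hj
    rw [choose_mul_kraw m r (by omega), show N - (k - j) = N - k + j by omega]
  have hsum := congrArg (coeff · r)
    (sum_neg_one_pow_mul_choose_mul_krawGenPoly (-(m : ℝ)⁻¹) (N - k) ht)
  simp only [finsetSum_coeff, coeff_C_mul, ← chooseZ_mul_krawZ_sub m r ht hk] at hsum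
  rw [hc, mul_div_assoc', div_mul_eq_mul_div, eq_div_iff hNr, mul_assoc, ← hsum, Finset.sum_mul]
  refine Finset.sum_congr rfl fun j hj => ?_
  rw [← hcoeff j hj]
  ring

theorem statement9 (m : ℕ) (hm : 2 ≤ m) (N r k t : ℕ) (hN : 1 ≤ N)
    (hr : r ≤ N) (ht : t ≤ k) (hk : k ≤ N) :
    ∑ j ∈ Finset.range (t + 1), (-1 : ℝ) ^ j * (t.choose j : ℝ) * kraw m N (k - j) r =
      (-(1 / ((m : ℝ) / (m + 1)))) ^ t *
        ((chooseZ ((N : ℤ) - t) ((r : ℤ) - t) : ℝ) / (N.choose r : ℝ)) *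
        krawZ m ((N : ℤ) - t) ((k : ℤ) - t) ((r : ℤ) - t) :=
  statement9_general m (by omega) N r k t hr ht hk
end
end

section
/- For every integer m ≥ 2 there exists a constant d > 0, depending only on m, such that for all integers N ≥ 1 and all integers 0 ≤ r, k ≤ N, |κ_k^N(r)| ≤ exp(−d·r·k/N). -/
noncomputable section

/-!
Put `q = 1 / m`. By the triangle inequality, `C(N, k) |κ_k^N(r)|` is at most
`∑ C(r, i) C(N - r, k - i) q ^ i`, which is the elementary symmetric polynomial `e_k` evaluated at
`r` copies of `q` and `N - r` copies of `1`. Maclaurin's inequality bounds `e_k` by `C(N, k)` times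
the `k`-th power of the mean `1 - (1 - q) r / N`, so `d = 1 - q` works because `1 - x ≤ exp (-x)`.

The inequality `N (k + 1) e_{k+1} ≤ (N - k) e_1 e_k` between consecutive elementary symmetric
polynomials is Chebyshev's sum inequality for the oppositely ordered families `a` and
`e_k (s \ {a})`, where `a` runs over the multiset `s`.
-/

section CommSemiring

variable {R : Type*} [CommSemiring R]

theorem esymm_zero_right (s : Multiset R) : s.esymm 0 = 1 := by
  simp [Multiset.esymm]

theorem esymm_eq_zero_of_card_lt {s : Multiset R} {k : ℕ} (h : s.card < k) : s.esymm k = 0 := by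
  simp [Multiset.esymm, Multiset.powersetCard_eq_empty k h]

theorem esymm_zero_left (k : ℕ) : (0 : Multiset R).esymm (k + 1) = 0 :=
  esymm_eq_zero_of_card_lt k.succ_pos

theorem esymm_cons_succ (a : R) (s : Multiset R) (k : ℕ) :
    (a ::ₘ s).esymm (k + 1) = s.esymm (k + 1) + a * s.esymm k := by
  simp [Multiset.esymm, Multiset.powersetCard_cons, Multiset.sum_map_mul_left]

theorem esymm_add (s t : Multiset R) (k : ℕ) :
    (s + t).esymm k = ∑ p ∈ Finset.HasAntidiagonal.antidiagonal k, s.esymm p.1 * t.esymm p.2 := by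
  induction s using Multiset.induction_on generalizing k with
  | empty =>
    cases k with
    | zero => simp [esymm_zero_right]
    | succ k =>
      simp [Finset.Nat.antidiagonal_succ, esymm_zero_right, esymm_zero_left]
  | cons a s ih =>
    cases k with
    | zero => simp [esymm_zero_right]
    | succ k =>
      have ih_succ := ih (k + 1)
      rw [Finset.Nat.sum_antidiagonal_succ, esymm_zero_right] at ih_succ
      rw [Multiset.cons_add, esymm_cons_succ, ih_succ, ih k, Finset.Nat.sum_antidiagonal_succ]
      simp only [esymm_zero_right, esymm_cons_succ, add_mul, Finset.sum_add_distrib,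
        Finset.mul_sum, mul_assoc, add_assoc]

theorem esymm_replicate (n : ℕ) (a : R) (k : ℕ) :
    (Multiset.replicate n a).esymm k = n.choose k * a ^ k := by
  induction n generalizing k with
  | zero => cases k <;> simp [esymm_zero_right, esymm_zero_left]
  | succ n ih =>
    cases k with
    | zero => simp [esymm_zero_right]
    | succ k =>
      rw [Multiset.replicate_succ, esymm_cons_succ, ih, ih, Nat.choose_succ_succ']
      push_cast
      ring

end CommSemiring

section CommRing

variable {R : Type*} [CommRing R] [DecidableEq R]

theorem sum_map_esymm_erase (s : Multiset R) (k : ℕ) :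
    (s.map fun a ↦ (s.erase a).esymm k).sum = (s.card - k) * s.esymm k := by
  induction s using Multiset.induction_on generalizing k with
  | empty => cases k <;> simp [esymm_zero_left]
  | cons b s ih =>
    have erase_cons : s.map (fun a ↦ ((b ::ₘ s).erase a).esymm k) =
        s.map fun a ↦ (b ::ₘ s.erase a).esymm k :=
      Multiset.map_congr rfl fun a ha ↦ by rw [Multiset.erase_cons_tail_of_mem ha]
    rw [Multiset.map_cons, Multiset.sum_cons, Multiset.erase_cons_head, erase_cons]
    cases k with
    | zero => simp [esymm_zero_right, add_comm]
    | succ k =>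
      simp only [esymm_cons_succ, Multiset.sum_map_add, Multiset.sum_map_mul_left, ih,
        Multiset.card_cons]
      push_cast
      ring

theorem sum_map_mul_esymm_erase (s : Multiset R) (k : ℕ) :
    (s.map fun a ↦ a * (s.erase a).esymm k).sum = (k + 1) * s.esymm (k + 1) := by
  have mul_esymm_erase : s.map (fun a ↦ a * (s.erase a).esymm k) =
      s.map fun a ↦ s.esymm (k + 1) - (s.erase a).esymm (k + 1) :=
    Multiset.map_congr rfl fun a ha ↦ by
      conv_rhs => rw [← Multiset.cons_erase ha, esymm_cons_succ, Multiset.cons_erase ha]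
      ring
  rw [mul_esymm_erase, Multiset.sum_map_sub, sum_map_esymm_erase]
  simp only [Multiset.map_const', Multiset.sum_replicate, nsmul_eq_mul]
  push_cast
  ring

end CommRing

section LinearOrderedRing

variable {R : Type*} [CommRing R] [LinearOrder R] [IsStrictOrderedRing R]

theorem card_mul_sum_map_mul_le_of_antivaryOn {ι : Type*} {s : Multiset ι} {f g : ι → R}
    (hfg : AntivaryOn f g {i | i ∈ s}) :
    s.card * (s.map fun i ↦ f i * g i).sum ≤ (s.map f).sum * (s.map g).sum := by
  classical
  have chebyshev := Antivary.card_mul_sum_le_sum_mul_sum (ι := s) (f := fun i ↦ f i)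
    (g := fun i ↦ g i) fun i j hij ↦ hfg (Multiset.coe_mem (x := i)) (Multiset.coe_mem (x := j)) hij
  simpa only [Finset.sum, Multiset.map_univ, Multiset.map_univ (f := fun i ↦ f i * g i),
    Multiset.card_coe] using chebyshev

theorem esymm_nonneg {s : Multiset R} (hs : ∀ a ∈ s, 0 ≤ a) (k : ℕ) : 0 ≤ s.esymm k := by
  refine Multiset.sum_nonneg fun _ hp ↦ ?_
  obtain ⟨t, ht, rfl⟩ := Multiset.mem_map.mp hp
  exact Multiset.prod_nonneg fun a ha ↦
    hs a (Multiset.mem_of_le (Multiset.mem_powersetCard.mp ht).1 ha)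

theorem esymm_cons_le_esymm_cons {s : Multiset R} (hs : ∀ a ∈ s, 0 ≤ a) {a b : R} (hab : a ≤ b)
    (k : ℕ) : (a ::ₘ s).esymm k ≤ (b ::ₘ s).esymm k := by
  cases k with
  | zero => simp only [esymm_zero_right, le_refl]
  | succ k =>
    rw [esymm_cons_succ, esymm_cons_succ]
    gcongr
    exact esymm_nonneg hs k

theorem antivaryOn_id_esymm_erase {s : Multiset R} (hs : ∀ a ∈ s, 0 ≤ a) (k : ℕ) :
    AntivaryOn id (fun a ↦ (s.erase a).esymm k) {a | a ∈ s} := by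
  refine AntivaryOn.symm fun a ha b hb hab ↦ ?_
  obtain ⟨t, rfl⟩ := Multiset.exists_cons_of_mem ha
  obtain ⟨u, rfl⟩ := Multiset.exists_cons_of_mem
    ((Multiset.mem_cons.mp hb).resolve_left (ne_of_gt hab))
  have erase_right : (a ::ₘ b ::ₘ u).erase b = a ::ₘ u := by
    rw [Multiset.cons_swap, Multiset.erase_cons_head]
  simp only [erase_right, Multiset.erase_cons_head]
  exact esymm_cons_le_esymm_cons (fun c hc ↦ hs c (by simp [hc])) hab.le k

theorem card_mul_esymm_succ_le {s : Multiset R} (hs : ∀ a ∈ s, 0 ≤ a) (k : ℕ) :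
    s.card * ((k + 1) * s.esymm (k + 1)) ≤ s.sum * ((s.card - k) * s.esymm k) := by
  simpa only [id, sum_map_mul_esymm_erase, sum_map_esymm_erase, Multiset.map_id'] using
    card_mul_sum_map_mul_le_of_antivaryOn (antivaryOn_id_esymm_erase hs k)

theorem card_pow_mul_esymm_le {s : Multiset R} (hs : ∀ a ∈ s, 0 ≤ a) (k : ℕ) :
    (s.card : R) ^ k * s.esymm k ≤ s.card.choose k * s.sum ^ k := by
  have sum_nonneg : 0 ≤ s.sum := Multiset.sum_nonneg hs
  induction k with
  | zero => simp [esymm_zero_right]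
  | succ k ih =>
    rcases lt_or_ge s.card (k + 1) with hk | hk
    · simp [esymm_eq_zero_of_card_lt hk, Nat.choose_eq_zero_of_lt hk]
    have card_sub_nonneg : (0 : R) ≤ s.card - k := by
      rw [sub_nonneg]
      exact_mod_cast Nat.le_of_succ_le hk
    have choose_succ : (s.card.choose (k + 1) : R) * (k + 1) = s.card.choose k * (s.card - k) := by
      rw [← Nat.cast_sub (Nat.le_of_succ_le hk)]
      exact_mod_cast Nat.choose_succ_right_eq s.card k
    have k_succ_pos : (0 : R) < k + 1 := by positivity
    refine le_of_mul_le_mul_left ?_ k_succ_pos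
    calc (k + 1) * ((s.card : R) ^ (k + 1) * s.esymm (k + 1))
        = s.card ^ k * (s.card * ((k + 1) * s.esymm (k + 1))) := by ring
      _ ≤ s.card ^ k * (s.sum * ((s.card - k) * s.esymm k)) := by
          exact mul_le_mul_of_nonneg_left (card_mul_esymm_succ_le hs k) (by positivity)
      _ = s.sum * (s.card - k) * (s.card ^ k * s.esymm k) := by ring
      _ ≤ s.sum * (s.card - k) * (s.card.choose k * s.sum ^ k) := by gcongr
      _ = (k + 1) * (s.card.choose (k + 1) * s.sum ^ (k + 1)) := by
          linear_combination -s.sum ^ (k + 1) * choose_succ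

end LinearOrderedRing

theorem esymm_le_choose_mul_mean_pow {F : Type*} [Field F] [LinearOrder F] [IsStrictOrderedRing F]
    {s : Multiset F} (hs : ∀ a ∈ s, 0 ≤ a) (k : ℕ) :
    s.esymm k ≤ s.card.choose k * (s.sum / s.card) ^ k := by
  rcases Multiset.empty_or_exists_mem s with rfl | ⟨a, ha⟩
  · cases k <;> simp [esymm_zero_right, esymm_zero_left]
  · have card_pos : (0 : F) < s.card := by
      exact_mod_cast Multiset.card_pos_iff_exists_mem.mpr ⟨a, ha⟩
    rw [div_pow, mul_div_assoc', le_div_iff₀' (pow_pos card_pos k)]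
    exact card_pow_mul_esymm_le hs k

theorem abs_kraw_le_esymm (m N k r : ℕ) :
    |kraw m N k r| ≤ (N.choose k : ℝ)⁻¹ *
      (Multiset.replicate r (m : ℝ)⁻¹ + Multiset.replicate (N - r) 1).esymm k := by
  simp only [esymm_add, esymm_replicate, one_pow, mul_one]
  rw [Finset.Nat.sum_antidiagonal_eq_sum_range_succ_mk, Finset.mul_sum]
  calc |kraw m N k r|
      ≤ ∑ j ∈ Finset.Icc (r + k - N) (min r k),
          (N.choose k : ℝ)⁻¹ * (r.choose j * (m : ℝ)⁻¹ ^ j * (N - r).choose (k - j)) := by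
        refine (Finset.abs_sum_le_sum_abs _ _).trans_eq (Finset.sum_congr rfl fun j _ ↦ ?_)
        simp only [abs_mul, abs_pow, abs_neg, abs_one, one_pow, one_mul, abs_inv, Nat.abs_cast]
        ring
    _ ≤ ∑ j ∈ Finset.range (k + 1),
          (N.choose k : ℝ)⁻¹ * (r.choose j * (m : ℝ)⁻¹ ^ j * (N - r).choose (k - j)) := by
        refine Finset.sum_le_sum_of_subset_of_nonneg (fun j hj ↦ ?_) fun _ _ _ ↦ by positivity
        simp only [Finset.mem_Icc, Finset.mem_range] at hj ⊢
        omega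

theorem abs_kraw_le_mean_pow (m : ℕ) {N r : ℕ} (hr : r ≤ N) (k : ℕ) :
    |kraw m N k r| ≤ ((r * (m : ℝ)⁻¹ + (N - r)) / N) ^ k := by
  set s : Multiset ℝ := Multiset.replicate r (m : ℝ)⁻¹ + Multiset.replicate (N - r) 1 with hs
  have card_eq : s.card = N := by simp [hs, hr]
  have sum_eq : s.sum = r * (m : ℝ)⁻¹ + (N - r) := by simp [hs, Nat.cast_sub hr]
  have nonneg : ∀ a ∈ s, 0 ≤ a := by
    intro a ha
    rcases Multiset.mem_add.mp ha with ha | ha <;> rw [Multiset.eq_of_mem_replicate ha] <;>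
      positivity
  have maclaurin := esymm_le_choose_mul_mean_pow nonneg k
  have sum_nonneg : 0 ≤ s.sum := Multiset.sum_nonneg nonneg
  rw [← sum_eq]
  rw [card_eq] at maclaurin
  calc |kraw m N k r| ≤ (N.choose k : ℝ)⁻¹ * s.esymm k := abs_kraw_le_esymm m N k r
    _ ≤ (s.sum / N) ^ k := inv_mul_le_of_le_mul₀ (by positivity) (by positivity) maclaurin

theorem statement10 (m : ℕ) (hm : 2 ≤ m) :
    ∃ d : ℝ, 0 < d ∧ ∀ N r k : ℕ, 1 ≤ N → r ≤ N → k ≤ N →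
      |kraw m N k r| ≤ Real.exp (-(d * r * k / N)) := by
  have inv_lt_one : (m : ℝ)⁻¹ < 1 := inv_lt_one_of_one_lt₀ (by exact_mod_cast hm)
  refine ⟨1 - (m : ℝ)⁻¹, sub_pos.mpr inv_lt_one, fun N r k hN hr _ ↦ ?_⟩
  have N_pos : (0 : ℝ) < N := by exact_mod_cast hN
  have cast_r_le : (r : ℝ) ≤ N := by exact_mod_cast hr
  have mean_nonneg : 0 ≤ (r * (m : ℝ)⁻¹ + (N - r)) / N :=
    div_nonneg (add_nonneg (by positivity) (sub_nonneg.mpr cast_r_le)) N_pos.le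
  have mean_eq : (r * (m : ℝ)⁻¹ + (N - r)) / N = 1 - (1 - (m : ℝ)⁻¹) * r / N := by
    field_simp
    ring
  calc |kraw m N k r| ≤ ((r * (m : ℝ)⁻¹ + (N - r)) / N) ^ k := abs_kraw_le_mean_pow m hr k
    _ ≤ Real.exp (-((1 - (m : ℝ)⁻¹) * r / N)) ^ k :=
        pow_le_pow_left₀ mean_nonneg (mean_eq.trans_le (Real.one_sub_le_exp_neg _)) k
    _ = Real.exp (-((1 - (m : ℝ)⁻¹) * r * k / N)) := by
        rw [← Real.exp_nat_mul]
        congr 1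
        ring
end
end
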